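/- Let S ⊆ ℂᵐ and X ⊆ ℂⁿ be convex domains and f : S → X a holomorphic map. Assume that τ is a holomorphic automorphism of X which is a generalized translation, and σ is a holomorphic automorphism of S such that τ ∘ f = f ∘ σ. Then σ is also a generalized translation. -/

import Mathlib

open scoped Manifold Topology
open Set Metric Filter

noncomputable section

/-- The complex Euclidean space `ℂⁿ`. -/
abbrev CSpace (n : ℕ) : Type := EuclideanSpace ℂ (Fin n)

/-- The `𝒪(Ω)`-convex hull of a set `K ⊆ Ω`. -/
def OHull {n : ℕ} (Ω K : Set (CSpace n)) : Set (CSpace n) :=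
  {x ∈ Ω | ∀ f : CSpace n → ℂ, DifferentiableOn ℂ f Ω → ‖f x‖ ≤ ⨆ y : K, ‖f ↑y‖}

/-- `τ` is a generalized translation of `Ω`: for every compact `𝒪(Ω)`-convex `K ⊆ Ω` there is
`j ≥ 1` with `τʲ(K) ∩ K = ∅` and `τʲ(K) ∪ K` again `𝒪(Ω)`-convex. -/
def IsGenTranslation {n : ℕ} (Ω : Set (CSpace n)) (τ : CSpace n → CSpace n) : Prop :=
  ∀ K : Set (CSpace n), IsCompact K → K ⊆ Ω → OHull Ω K = K →
    ∃ j : ℕ, 1 ≤ j ∧ (τ^[j] '' K) ∩ K = ∅ ∧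
      OHull Ω ((τ^[j] '' K) ∪ K) = (τ^[j] '' K) ∪ K

/-! Put `L` for the `𝒪(X)`-hull of `f(K)`, which is compact because `X` is convex, and choose `j`
such that `τʲ(L)` and `L` are disjoint with `𝒪(X)`-convex union. The equation `τ ∘ f = f ∘ σ`
puts `σʲ(K)` over `τʲ(L)` and `K` over `L`, so `σʲ(K)` and `K` are disjoint, and a point of the
`𝒪(S)`-hull of `σʲ(K) ∪ K` lies over one of the two pieces. Holomorphic functions on `X` close
to `1` on that piece and to `0` on the other one, composed with `f`, show that it already lies
in the hull of `σʲ(K)` or of `K`, both of which are `𝒪(S)`-convex.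

Such functions come from Shilov's idempotent theorem in the uniform closure of `𝒪(X)` on `L ∪
τʲ(L)`. By Hefer's decomposition its characters are the evaluations at the points of the compact
set, hence are separated by the `n` coordinate functions. The idempotent theorem for finitely
many separating elements is proved by induction on their number: idempotents on the fibres of
one element lift locally, the local lifts are glued by approximately solving a `∂̄`-equation
with the Cauchy transform, and the binomial series of `(1 + s / √(s ^ 2)) / 2` turns the
approximate idempotent into an exact one. -/

section IdempotentSeries

lemma summable_norm_pow_of_norm_lt_one {A : Type*} [NormedRing A] {y : A} (hy : ‖y‖ < 1) :
    Summable fun k ↦ ‖y ^ k‖ := by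
  simpa using summable_norm_pow_mul_geometric_of_norm_lt_one 0 hy

variable {A : Type*} [NormedCommRing A] [NormedAlgebra ℂ A]

lemma norm_choose_neg_half_le_one (k : ℕ) : ‖Ring.choose (-2⁻¹ : ℂ) k‖ ≤ 1 := by
  induction k with
  | zero => simp
  | succ k ih =>
    have hrec : (k + 1 : ℂ) * Ring.choose (-2⁻¹ : ℂ) (k + 1) =
        -(k + 2⁻¹) * Ring.choose (-2⁻¹ : ℂ) k := by
      have h := Ring.choose_smul_choose (-2⁻¹ : ℂ) k.le_succ
      simp only [Nat.choose_succ_self_right, Nat.succ_eq_add_one, Nat.add_sub_cancel_left,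
        Ring.choose_one_right, nsmul_eq_mul, Nat.cast_add, Nat.cast_one] at h
      linear_combination h
    have hk : ‖(k + 1 : ℂ)‖ = k + 1 := by exact_mod_cast Complex.norm_natCast (k + 1)
    have hle : ‖-(k + 2⁻¹ : ℂ)‖ ≤ k + 1 := by
      rw [norm_neg]
      exact (norm_add_le _ _).trans (by norm_num)
    have hnorm := congrArg norm hrec
    rw [norm_mul, norm_mul, hk] at hnorm
    nlinarith [norm_nonneg (Ring.choose (-2⁻¹ : ℂ) k)]

lemma sum_antidiagonal_choose_neg_half_mul (n : ℕ) :
    ∑ ij ∈ Finset.HasAntidiagonal.antidiagonal n,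
      Ring.choose (-2⁻¹ : ℂ) ij.1 * Ring.choose (-2⁻¹ : ℂ) ij.2 = (-1) ^ n := by
  rw [← Ring.add_choose_eq n (Commute.all _ _), ← neg_add, ← two_mul,
    mul_inv_cancel₀ two_ne_zero, Ring.choose_neg', Ring.multichoose_one]
  simp [Int.negOnePow_def, Units.smul_def]

lemma norm_choose_neg_half_smul_le (y : A) (k : ℕ) :
    ‖Ring.choose (-2⁻¹ : ℂ) k • y ^ k‖ ≤ ‖y ^ k‖ := by
  rw [norm_smul]
  exact mul_le_of_le_one_left (norm_nonneg _) (norm_choose_neg_half_le_one k)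

lemma summable_norm_choose_neg_half_smul {y : A} (hy : Summable fun k ↦ ‖y ^ k‖) :
    Summable fun k ↦ ‖Ring.choose (-2⁻¹ : ℂ) k • y ^ k‖ :=
  hy.of_nonneg_of_le (fun _ ↦ norm_nonneg _) (norm_choose_neg_half_smul_le y)

/-- The `N`-th partial sum of the series `idemSum x`. -/
def idemPartialSum (N : ℕ) (x : A) : A :=
  (2 : ℂ)⁻¹ • (1 + (2 * x - 1) *
    ∑ k ∈ Finset.range N, Ring.choose (-2⁻¹ : ℂ) k • (4 * (x ^ 2 - x)) ^ k)

lemma map_idemPartialSum {A' : Type*} [NormedCommRing A'] [NormedAlgebra ℂ A'] {F : Type*}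
    [FunLike F A A'] [AlgHomClass F ℂ A A'] (φ : F) (N : ℕ) (x : A) :
    φ (idemPartialSum N x) = idemPartialSum N (φ x) := by
  simp only [idemPartialSum, map_smul, map_add, map_sub, map_mul, map_one, map_ofNat, map_sum,
    map_pow]

lemma idemPartialSum_one (x : A) : idemPartialSum 1 x = x := by
  simp [idemPartialSum, two_mul, ← two_smul ℂ x]

/-- The binomial series of `(1 + s / √(s ^ 2)) / 2`, where `s = 2 * x - 1`, expanded at
`s ^ 2 = 1 + 4 * (x ^ 2 - x)`. Where it converges absolutely, it is an idempotent. -/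
def idemSum (x : A) : A :=
  (2 : ℂ)⁻¹ • (1 + (2 * x - 1) * ∑' k : ℕ, Ring.choose (-2⁻¹ : ℂ) k • (4 * (x ^ 2 - x)) ^ k)

variable [CompleteSpace A]

lemma tsum_choose_neg_half_smul_sq_mul {y : A} (hy : Summable fun k ↦ ‖y ^ k‖) :
    (∑' k : ℕ, Ring.choose (-2⁻¹ : ℂ) k • y ^ k) ^ 2 * (1 + y) = 1 := by
  have hgeom : (∑' k : ℕ, Ring.choose (-2⁻¹ : ℂ) k • y ^ k) ^ 2 = ∑' n : ℕ, (-y) ^ n := by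
    have hs := summable_norm_choose_neg_half_smul hy
    rw [sq, tsum_mul_tsum_eq_tsum_sum_antidiagonal_of_summable_norm hs hs]
    refine tsum_congr fun n ↦ ?_
    calc _ = ∑ ij ∈ Finset.HasAntidiagonal.antidiagonal n,
          (Ring.choose (-2⁻¹ : ℂ) ij.1 * Ring.choose (-2⁻¹ : ℂ) ij.2) • y ^ n := by
          refine Finset.sum_congr rfl fun ij hij ↦ ?_
          rw [smul_mul_smul_comm, ← pow_add, Finset.HasAntidiagonal.mem_antidiagonal.1 hij]
      _ = (-y) ^ n := by
          rw [← Finset.sum_smul, sum_antidiagonal_choose_neg_half_mul, Algebra.smul_def, map_pow,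
            map_neg, map_one, ← neg_pow]
  have hneg : Summable fun n ↦ (-y) ^ n := by
    refine Summable.of_norm (hy.congr fun n ↦ ?_)
    rcases n.even_or_odd with hn | hn <;> simp [hn.neg_pow]
  rw [hgeom, ← sub_neg_eq_add, hneg.tsum_pow_mul_one_sub]

theorem isIdempotentElem_idemSum {x : A} (hx : Summable fun k ↦ ‖(4 * (x ^ 2 - x)) ^ k‖) :
    IsIdempotentElem (idemSum x) := by
  have hsq := tsum_choose_neg_half_smul_sq_mul hx
  set T := ∑' k : ℕ, Ring.choose (-2⁻¹ : ℂ) k • (4 * (x ^ 2 - x)) ^ k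
  have hhalf : 2 * algebraMap ℂ A 2⁻¹ = 1 := by
    rw [← map_ofNat (algebraMap ℂ A) 2, ← map_mul, mul_inv_cancel₀ two_ne_zero, map_one]
  rw [IsIdempotentElem, idemSum, Algebra.smul_def]
  set h := algebraMap ℂ A 2⁻¹
  linear_combination h ^ 2 * hsq + h * (1 + (2 * x - 1) * T) * hhalf

lemma map_idemSum {A' : Type*} [NormedCommRing A'] [NormedAlgebra ℂ A'] {F : Type*}
    [FunLike F A A'] [AlgHomClass F ℂ A A'] [ContinuousMapClass F A A'] (φ : F) {x : A}
    (hx : Summable fun k ↦ ‖(4 * (x ^ 2 - x)) ^ k‖) : φ (idemSum x) = idemSum (φ x) := by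
  have hs := (summable_norm_choose_neg_half_smul hx).of_norm
  have hφ := hs.map_tsum φ (map_continuous φ)
  simp only [map_smul, map_sub, map_mul, map_ofNat, map_pow] at hφ
  simp only [idemSum, map_smul, map_add, map_sub, map_mul, map_one, map_ofNat, hφ]

lemma norm_idemSum_sub_idemPartialSum_le {x : A} {r : ℝ} (hr : r < 1)
    (hx : ‖4 * (x ^ 2 - x)‖ ≤ r) {N : ℕ} (hN : 1 ≤ N) :
    ‖idemSum x - idemPartialSum N x‖ ≤ 2⁻¹ * (‖2 * x - 1‖ * (r ^ N / (1 - r))) := by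
  set y := 4 * (x ^ 2 - x) with hy
  have hr0 : 0 ≤ r := (norm_nonneg _).trans hx
  have hs := (summable_norm_choose_neg_half_smul
    (summable_norm_pow_of_norm_lt_one (hx.trans_lt hr))).of_norm
  have htail : ∑' k : ℕ, Ring.choose (-2⁻¹ : ℂ) k • y ^ k -
      ∑ k ∈ Finset.range N, Ring.choose (-2⁻¹ : ℂ) k • y ^ k =
      ∑' k : ℕ, Ring.choose (-2⁻¹ : ℂ) (k + N) • y ^ (k + N) := by
    rw [← hs.sum_add_tsum_nat_add N, add_sub_cancel_left]
  have hterm (k : ℕ) : ‖Ring.choose (-2⁻¹ : ℂ) (k + N) • y ^ (k + N)‖ ≤ r ^ N * r ^ k :=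
    calc _ ≤ ‖y ^ (k + N)‖ := norm_choose_neg_half_smul_le y _
      _ ≤ ‖y‖ ^ (k + N) := norm_pow_le' y (by lia)
      _ ≤ r ^ N * r ^ k := by rw [← pow_add, add_comm N]; gcongr
  have hbound := tsum_of_norm_bounded ((hasSum_geometric_of_lt_one hr0 hr).mul_left _) hterm
  have hsub : idemSum x - idemPartialSum N x = (2 : ℂ)⁻¹ • ((2 * x - 1) *
      ∑' k : ℕ, Ring.choose (-2⁻¹ : ℂ) (k + N) • y ^ (k + N)) := by
    rw [idemSum, idemPartialSum, ← smul_sub, ← hy, add_sub_add_left_eq_sub, ← mul_sub, htail]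
  rw [hsub, norm_smul, norm_inv, Complex.norm_ofNat, div_eq_mul_inv]
  gcongr
  exact (norm_mul_le _ _).trans (by gcongr)

lemma norm_two_mul_sub_one_of_isIdempotentElem {c : ℂ} (hc : IsIdempotentElem c) :
    ‖2 * c - 1‖ = 1 := by
  rcases IsIdempotentElem.iff_eq_zero_or_one.1 hc with rfl | rfl <;> norm_num

lemma norm_four_mul_sq_sub_le {w c : ℂ} (hc : IsIdempotentElem c) (hw : ‖w - c‖ ≤ 1 / 25) :
    ‖4 * (w ^ 2 - w)‖ ≤ 1 / 5 := by
  have hadd : ‖w + c - 1‖ ≤ 26 / 25 :=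
    calc ‖w + c - 1‖ = ‖(w - c) + (2 * c - 1)‖ := by ring_nf
      _ ≤ 1 / 25 + 1 := norm_add_le_of_le hw (norm_two_mul_sub_one_of_isIdempotentElem hc).le
      _ = 26 / 25 := by norm_num
  calc ‖4 * (w ^ 2 - w)‖ = 4 * (‖w - c‖ * ‖w + c - 1‖) := by
        rw [← norm_mul, ← Complex.norm_ofNat 4, ← norm_mul]
        congr 1
        linear_combination 4 * hc.eq
    _ ≤ 4 * (1 / 25 * (26 / 25)) := by gcongr
    _ ≤ 1 / 5 := by norm_num

lemma idemSum_eq_of_norm_sub_le {w c : ℂ} (hc : IsIdempotentElem c) (hw : ‖w - c‖ ≤ 1 / 25) :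
    idemSum w = c := by
  have hy := norm_four_mul_sq_sub_le hc hw
  have hidem := isIdempotentElem_idemSum
    (summable_norm_pow_of_norm_lt_one (hy.trans_lt (by norm_num)))
  have hw1 : ‖2 * w - 1‖ ≤ 27 / 25 := by
    calc ‖2 * w - 1‖ = ‖2 * (w - c) + (2 * c - 1)‖ := by ring_nf
      _ ≤ ‖(2 : ℂ)‖ * ‖w - c‖ + ‖2 * c - 1‖ := (norm_add_le _ _).trans_eq (by rw [norm_mul])
      _ ≤ 2 * (1 / 25) + 1 := by
        rw [Complex.norm_ofNat, norm_two_mul_sub_one_of_isIdempotentElem hc]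
        gcongr
      _ = 27 / 25 := by norm_num
  have hclose : ‖idemSum w - c‖ < 1 := by
    have h := norm_idemSum_sub_idemPartialSum_le (by norm_num) hy le_rfl
    rw [idemPartialSum_one] at h
    calc ‖idemSum w - c‖ ≤ ‖idemSum w - w‖ + ‖w - c‖ := norm_sub_le_norm_sub_add_norm_sub ..
      _ ≤ 2⁻¹ * (27 / 25 * ((1 / 5) ^ 1 / (1 - 1 / 5))) + 1 / 25 := by
        refine add_le_add (h.trans ?_) hw
        gcongr
      _ < 1 := by norm_num
  rcases IsIdempotentElem.iff_eq_zero_or_one.1 hidem with h | h <;>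
    rcases IsIdempotentElem.iff_eq_zero_or_one.1 hc with rfl | rfl <;>
    simp_all

end IdempotentSeries

section Characters

open WeakDual

variable {A : Type*} [NormedCommRing A] [NormedAlgebra ℂ A]

lemma isIdempotentElem_indicator_one {α : Type*} (V : Set α) (a : α) :
    IsIdempotentElem (V.indicator (1 : α → ℂ) a) := by
  by_cases ha : a ∈ V <;> simp [ha, IsIdempotentElem]

variable [CompleteSpace A]

lemma norm_character_apply_le (φ : characterSpace ℂ A) (a : A) : ‖φ a‖ ≤ ‖a‖ := by
  by_contra! hlt
  have hφ : φ a ≠ 0 := norm_pos_iff.1 ((norm_nonneg a).trans_lt hlt)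
  have hunit : IsUnit (1 - (φ a)⁻¹ • a) := by
    refine isUnit_one_sub_of_norm_lt_one ?_
    rwa [norm_smul, norm_inv, inv_mul_lt_one₀ (norm_pos_iff.2 hφ)]
  refine (hunit.map φ).ne_zero ?_
  rw [map_sub, map_one, map_smul, smul_eq_mul, inv_mul_cancel₀ hφ, sub_self]

lemma eq_of_isIdempotentElem_of_character_eq {e e' : A} (he : IsIdempotentElem e)
    (he' : IsIdempotentElem e') (h : ∀ φ : characterSpace ℂ A, φ e = φ e') : e = e' := by
  have hunit : IsUnit (1 - (e - e') ^ 2) := by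
    by_contra hn
    obtain ⟨φ, hφ⟩ := CharacterSpace.exists_apply_eq_zero hn
    simp [h φ] at hφ
  have hmul : (1 - (e - e') ^ 2) * (e - e') = 0 := by
    linear_combination (-e - 1 + 3 * e') * he.eq + (e' + 1 - 3 * e) * he'.eq
  exact sub_eq_zero.1 (hunit.mul_right_eq_zero.1 hmul)

lemma summable_norm_pow_of_norm_character_le {y : A} {r : ℝ} (hr : r < 1)
    (hy : ∀ φ : characterSpace ℂ A, ‖φ y‖ ≤ r) : Summable fun k ↦ ‖y ^ k‖ := by
  obtain ⟨s, hs, hs1⟩ := exists_between (max_lt one_pos hr)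
  obtain ⟨hs0, hrs⟩ := max_lt_iff.1 hs
  have hradius : spectralRadius ℂ y < ENNReal.ofReal s := by
    refine lt_of_le_of_lt (iSup₂_le fun w hw ↦ ?_) ((ENNReal.ofReal_lt_ofReal_iff hs0).2 hrs)
    obtain ⟨φ, rfl⟩ := CharacterSpace.mem_spectrum_iff_exists.1 hw
    rw [← enorm_eq_nnnorm, ← ofReal_norm]
    exact ENNReal.ofReal_le_ofReal (hy φ)
  refine (summable_geometric_of_lt_one hs0.le hs1).of_norm_bounded_eventually_nat ?_
  filter_upwards [(spectrum.pow_norm_pow_one_div_tendsto_nhds_spectralRadius y).eventually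
    (gt_mem_nhds hradius), eventually_ge_atTop 1] with k hk hk1
  have hroot := pow_le_pow_left₀ (by positivity) ((ENNReal.ofReal_lt_ofReal_iff hs0).1 hk).le k
  rwa [one_div, Real.rpow_inv_natCast_pow (norm_nonneg _) (by lia), ← norm_norm] at hroot

theorem idemSum_of_norm_character_sub_indicator_le {V : Set (characterSpace ℂ A)} {a : A}
    (ha : ∀ φ, ‖φ a - V.indicator 1 φ‖ ≤ 1 / 25) :
    IsIdempotentElem (idemSum a) ∧ ∀ φ : characterSpace ℂ A, φ (idemSum a) = V.indicator 1 φ := by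
  have hsum : Summable fun k ↦ ‖(4 * (a ^ 2 - a)) ^ k‖ := by
    refine summable_norm_pow_of_norm_character_le (r := 1 / 5) (by norm_num) fun φ ↦ ?_
    simp only [map_mul, map_sub, map_pow, map_ofNat]
    exact norm_four_mul_sq_sub_le (isIdempotentElem_indicator_one V φ) (ha φ)
  refine ⟨isIdempotentElem_idemSum hsum, fun φ ↦ ?_⟩
  rw [map_idemSum φ hsum, idemSum_eq_of_norm_sub_le (isIdempotentElem_indicator_one V φ) (ha φ)]

end Characters

section CauchyPompeiu

open MeasureTheory Complex
open scoped ComplexConjugate Real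

variable {E : Type*} [NormedAddCommGroup E] [NormedSpace ℂ E]

/-- The Wirtinger derivative `∂g/∂w̄` of a vector-valued function. -/
def dbar (g : ℂ → E) (w : ℂ) : E := (2 : ℂ)⁻¹ • (fderiv ℝ g w 1 + I • fderiv ℝ g w I)

lemma continuous_dbar {g : ℂ → E} (hg : ContDiff ℝ 1 g) : Continuous (dbar g) := by
  have := hg.continuous_fderiv one_ne_zero
  unfold dbar
  fun_prop

lemma dbar_eq_zero_of_eventuallyEq_const {g : ℂ → E} {w : ℂ} {c : E}
    (h : g =ᶠ[𝓝 w] fun _ ↦ c) : dbar g w = 0 := by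
  simp [dbar, h.fderiv_eq]

lemma dbar_eq_zero_of_notMem_tsupport {g : ℂ → E} {w : ℂ} (hw : w ∉ tsupport g) :
    dbar g w = 0 :=
  dbar_eq_zero_of_eventuallyEq_const (notMem_tsupport_iff_eventuallyEq.1 hw)

lemma dbar_sum_smul {ι : Type*} {s : Finset ι} {u : ι → ℂ → ℂ}
    (hu : ∀ i ∈ s, Differentiable ℝ (u i)) (c : ι → E) (w : ℂ) :
    dbar (fun w ↦ ∑ i ∈ s, u i w • c i) w = ∑ i ∈ s, dbar (u i) w • c i := by
  have h : HasFDerivAt (fun w ↦ ∑ i ∈ s, u i w • c i)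
      (∑ i ∈ s, (fderiv ℝ (u i) w).smulRight (c i)) w :=
    HasFDerivAt.fun_sum fun i hi ↦ (hu i hi w).hasFDerivAt.smul_const (c i)
  simp only [dbar, h.fderiv, _root_.sum_apply, ContinuousLinearMap.smulRight_apply, Finset.smul_sum,
    ← Finset.sum_add_distrib, smul_smul, ← add_smul, smul_eq_mul]

lemma map_add_I_smul_map_I_mul (L : ℂ →L[ℝ] E) (u : ℂ) :
    L u + I • L (I * u) = conj u • (L 1 + I • L I) := by
  have hu : u = u.re • (1 : ℂ) + u.im • I := by simp [re_add_im]
  have hIu : I * u = u.re • I - u.im • (1 : ℂ) := by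
    apply Complex.ext <;> simp
  have hconj : conj u = u.re - u.im * I := by apply Complex.ext <;> simp
  have hLu : L u = (u.re : ℂ) • L 1 + (u.im : ℂ) • L I := by
    conv_lhs => rw [hu]
    simp only [map_add, map_smul, Complex.coe_smul]
  have hLIu : L (I * u) = (u.re : ℂ) • L I - (u.im : ℂ) • L 1 := by
    simp only [hIu, map_sub, map_smul, Complex.coe_smul]
  rw [hLu, hLIu, hconj]
  match_scalars
  · ring
  · linear_combination (u.im : ℂ) * I_mul_I

lemma integral_Ioi_fderiv_smul {F : Type*} [NormedAddCommGroup F] [NormedSpace ℝ F]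
    {E : Type*} [NormedAddCommGroup E] [NormedSpace ℝ E] [CompleteSpace E] {g : F → E}
    (hg : ContDiff ℝ 1 g) (hs : HasCompactSupport g) {u : F} (hu : u ≠ 0) :
    ∫ r in Ioi (0 : ℝ), fderiv ℝ g (r • u) u = -g 0 := by
  have hderiv (r : ℝ) : HasDerivAt (fun r : ℝ ↦ g (r • u)) (fderiv ℝ g (r • u) u) r := by
    refine (hg.differentiable one_ne_zero _).hasFDerivAt.comp_hasDerivAt r ?_
    simpa using (hasDerivAt_id r).smul_const u
  have hcs : HasCompactSupport fun r : ℝ ↦ g (r • u) :=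
    hs.comp_isClosedEmbedding (isClosedEmbedding_smul_left hu)
  have h := hcs.integral_Ioi_deriv_eq (hg.comp (contDiff_id.smul (contDiff_const (c := u)))) 0
  refine (integral_congr_ae (.of_forall fun r ↦ (hderiv r).deriv.symm)).trans (h.trans ?_)
  simp

lemma integral_fderiv_circleMap_mul_I [CompleteSpace E] {g : ℂ → E} (hg : ContDiff ℝ 1 g) (r : ℝ) :
    ∫ θ in -π..π, fderiv ℝ g (circleMap 0 r θ) (circleMap 0 r θ * I) = 0 := by
  have hderiv (θ : ℝ) : HasDerivAt (fun θ ↦ g (circleMap 0 r θ))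
      (fderiv ℝ g (circleMap 0 r θ) (circleMap 0 r θ * I)) θ :=
    (hg.differentiable one_ne_zero _).hasFDerivAt.comp_hasDerivAt θ (hasDerivAt_circleMap 0 r θ)
  have hcont : Continuous fun θ : ℝ ↦ fderiv ℝ g (circleMap 0 r θ) (circleMap 0 r θ * I) := by
    have := hg.continuous_fderiv one_ne_zero
    fun_prop
  rw [intervalIntegral.integral_eq_sub_of_hasDerivAt (fun θ _ ↦ hderiv θ)
    (hcont.intervalIntegrable _ _), sub_eq_zero]
  have h := periodic_circleMap 0 r (-π)
  rw [← h]
  ring_nf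

lemma integrableOn_polarCoord_target_clm_apply {L : ℂ → ℂ →L[ℝ] E} (hL : Continuous L)
    (hs : HasCompactSupport L) {v : ℝ → ℂ} (hv : Continuous v) :
    IntegrableOn (fun p : ℝ × ℝ ↦ L (circleMap 0 p.1 p.2) (v p.2)) polarCoord.target := by
  obtain ⟨R, hR⟩ := hs.isCompact.isBounded.subset_closedBall 0
  have hcont : Continuous fun p : ℝ × ℝ ↦ L (circleMap 0 p.1 p.2) (v p.2) := by
    unfold circleMap
    fun_prop
  refine IntegrableOn.of_forall_sdiff_eq_zero (s := Icc 0 R ×ˢ Icc (-π) π)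
    (hcont.continuousOn.integrableOn_compact (isCompact_Icc.prod isCompact_Icc))
    (measurableSet_Ioi.prod measurableSet_Ioo) ?_
  rintro ⟨r, θ⟩ ⟨⟨hr, hθ⟩, hnot⟩
  have hRr : R < r := not_le.1 fun hle ↦ hnot ⟨⟨le_of_lt hr, hle⟩, Ioo_subset_Icc_self hθ⟩
  have hzero : L (circleMap 0 r θ) = 0 := image_eq_zero_of_notMem_tsupport fun hmem ↦ by
    have := mem_closedBall_zero_iff.1 (hR hmem)
    rw [norm_circleMap_zero, abs_of_pos hr] at this
    linarith
  simp [hzero]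

variable [CompleteSpace E]

lemma integral_polarCoord_target_fderiv_radial {g : ℂ → E} (hg : ContDiff ℝ 1 g)
    (hs : HasCompactSupport g) :
    ∫ p in polarCoord.target, fderiv ℝ g (circleMap 0 p.1 p.2) (circleMap 0 1 p.2) =
      -(2 * π) • g 0 := by
  have hint := integrableOn_polarCoord_target_clm_apply (hg.continuous_fderiv one_ne_zero)
    (hs.fderiv ℝ) (continuous_circleMap 0 1)
  have hradial (θ : ℝ) :
      ∫ r in Ioi (0 : ℝ), fderiv ℝ g (circleMap 0 r θ) (circleMap 0 1 θ) = -g 0 := by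
    rw [← integral_Ioi_fderiv_smul hg hs (circleMap_ne_center one_ne_zero : circleMap 0 1 θ ≠ 0)]
    simp [circleMap]
  rw [polarCoord_target, IntegrableOn, Measure.volume_eq_prod, ← Measure.prod_restrict] at hint
  rw [polarCoord_target, Measure.volume_eq_prod, ← Measure.prod_restrict, integral_prod_symm _ hint]
  simp only [hradial, integral_const, measureReal_restrict_apply_univ, Real.volume_real_Ioo,
    sub_neg_eq_add, ← two_mul, max_eq_left Real.two_pi_pos.le, smul_neg, neg_smul]

lemma integral_polarCoord_target_fderiv_angular {g : ℂ → E} (hg : ContDiff ℝ 1 g)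
    (hs : HasCompactSupport g) :
    ∫ p in polarCoord.target, fderiv ℝ g (circleMap 0 p.1 p.2) (I * circleMap 0 1 p.2) = 0 := by
  have hint := integrableOn_polarCoord_target_clm_apply (hg.continuous_fderiv one_ne_zero)
    (hs.fderiv ℝ) ((continuous_circleMap 0 1).const_mul I)
  rw [polarCoord_target, Measure.volume_eq_prod] at *
  rw [setIntegral_prod _ hint]
  refine setIntegral_eq_zero_of_forall_eq_zero fun r hr ↦ ?_
  have hscale (θ : ℝ) : circleMap 0 r θ * I = r • (I * circleMap 0 1 θ) := by
    simp [circleMap]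
    ring
  have h := integral_fderiv_circleMap_mul_I hg r
  simp only [hscale, map_smul, intervalIntegral.integral_smul] at h
  rw [← integral_Ioc_eq_integral_Ioo, ← intervalIntegral.integral_of_le (by linarith [Real.pi_pos])]
  exact (smul_eq_zero.1 h).resolve_left (ne_of_gt hr)

lemma integral_inv_smul_dbar {g : ℂ → E} (hg : ContDiff ℝ 1 g) (hs : HasCompactSupport g) :
    ∫ w, w⁻¹ • dbar g w = -π • g 0 := by
  have hpolar {p : ℝ × ℝ} (hp : p ∈ polarCoord.target) :
      p.1 • ((Complex.polarCoord.symm p)⁻¹ • dbar g (Complex.polarCoord.symm p)) =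
        (2 : ℂ)⁻¹ • (fderiv ℝ g (circleMap 0 p.1 p.2) (circleMap 0 1 p.2) +
          I • fderiv ℝ g (circleMap 0 p.1 p.2) (I * circleMap 0 1 p.2)) := by
    have hp0 : (p.1 : ℂ) ≠ 0 := ofReal_ne_zero.2 (ne_of_gt hp.1)
    have hsymm : Complex.polarCoord.symm p = circleMap 0 p.1 p.2 := by
      simp [Complex.polarCoord_symm_apply, circleMap, exp_mul_I]
    have hconj : conj (circleMap 0 1 p.2) = p.1 * (circleMap 0 p.1 p.2)⁻¹ := by
      simp [circleMap, ← exp_conj, exp_neg, mul_comm (cexp _)⁻¹, hp0]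
    rw [hsymm, map_add_I_smul_map_I_mul, hconj, dbar, ← Complex.coe_smul]
    module
  have hint {v : ℝ → ℂ} (hv : Continuous v) := integrableOn_polarCoord_target_clm_apply
    (hg.continuous_fderiv one_ne_zero) (hs.fderiv ℝ) hv
  rw [← Complex.integral_comp_polarCoord_symm,
    setIntegral_congr_fun polarCoord.open_target.measurableSet fun _ hp ↦ hpolar hp,
    integral_smul, integral_add (hint (continuous_circleMap 0 1))
    ((hint ((continuous_circleMap 0 1).const_mul I)).fun_smul I), integral_smul,
    integral_polarCoord_target_fderiv_radial hg hs, integral_polarCoord_target_fderiv_angular hg hs,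
    smul_zero, add_zero, ← Complex.coe_smul, ← Complex.coe_smul, smul_smul]
  push_cast
  ring_nf

theorem integral_inv_sub_smul_dbar {g : ℂ → E} (hg : ContDiff ℝ 1 g) (hs : HasCompactSupport g)
    (a : ℂ) : ∫ w, (w - a)⁻¹ • dbar g w = -π • g a := by
  have h := integral_inv_smul_dbar (g := fun w ↦ g (w + a)) (hg.comp (by fun_prop))
    (hs.comp_homeomorph (Homeomorph.addRight a))
  rw [zero_add] at h
  rw [← h, ← integral_add_right_eq_self _ a]
  simp only [dbar, fderiv_comp_add_right, add_sub_cancel_right]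

lemma locallyIntegrable_inv_sub (a : ℂ) : LocallyIntegrable fun w ↦ (w - a)⁻¹ := by
  have h : LocallyIntegrable fun w : ℂ ↦ w⁻¹ :=
    locallyIntegrable_of_norm_le_rpow (C := 1) (α := 1) (by simp) (by simp)
      (.of_forall fun w ↦ by simp [Real.rpow_neg_one]) measurable_inv.aestronglyMeasurable
  rw [locallyIntegrable_iff] at h ⊢
  intro K hK
  have h' := h _ (hK.image (f := fun w ↦ w - a) (by fun_prop))
  rwa [(measurePreserving_sub_right volume a).integrableOn_image (measurableEmbedding_subRight a)]
    at h'

lemma integrableOn_ball_norm_sub_inv (a c : ℂ) (r : ℝ) :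
    IntegrableOn (fun w ↦ ‖w - a‖⁻¹) (ball c r) := by
  have h := ((locallyIntegrable_inv_sub a).integrableOn_isCompact (isCompact_closedBall c r)).norm
  simp only [norm_inv] at h
  exact IntegrableOn.mono_set h ball_subset_closedBall

lemma integral_ball_norm_sub_inv_le {R : ℝ} {a : ℂ} (ha : a ∈ ball 0 R) :
    ∫ w in ball 0 R, ‖w - a‖⁻¹ ≤ ∫ w in ball (0 : ℂ) (2 * R), ‖w‖⁻¹ := by
  have hsub : ball (0 : ℂ) R ⊆ ball a (2 * R) := ball_subset_ball' <| by
    rw [dist_comm]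
    linarith [mem_ball.1 ha]
  calc ∫ w in ball 0 R, ‖w - a‖⁻¹
      ≤ ∫ w in ball a (2 * R), ‖w - a‖⁻¹ :=
        setIntegral_mono_set (integrableOn_ball_norm_sub_inv a a _)
          (.of_forall fun w ↦ inv_nonneg.2 (norm_nonneg _)) hsub.eventuallyLE
    _ = ∫ w in ball (0 : ℂ) (2 * R), ‖w‖⁻¹ := by
        rw [← (measurePreserving_sub_right volume a).setIntegral_preimage_emb
          (measurableEmbedding_subRight a) (fun w ↦ ‖w‖⁻¹)]
        congr 2
        ext w
        simp [dist_eq_norm]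

lemma sub_integral_eq_neg_integral_inv_sub_smul_dbar_add {g G : ℂ → E} (hg : ContDiff ℝ 1 g)
    (hG : Continuous G) {R : ℝ} (hs : tsupport g ⊆ ball 0 R) (a : ℂ) :
    g a - (π : ℂ)⁻¹ • ∫ w in ball 0 R, G w
      = -((π : ℂ)⁻¹ • ∫ w in ball 0 R, ((w - a)⁻¹ • dbar g w + G w)) := by
  have hcs : HasCompactSupport g := (isCompact_closedBall 0 R).of_isClosed_subset
    (isClosed_tsupport g) (hs.trans ball_subset_closedBall)
  have hGint : IntegrableOn G (ball 0 R) :=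
    (hG.continuousOn.integrableOn_compact (isCompact_closedBall 0 R)).mono_set
      ball_subset_closedBall
  have hdint : IntegrableOn (fun w ↦ (w - a)⁻¹ • dbar g w) (ball 0 R) :=
    (((locallyIntegrable_inv_sub a).smul_continuous (continuous_dbar hg)).integrableOn_isCompact
      (isCompact_closedBall 0 R)).mono_set ball_subset_closedBall
  have hformula : ∫ w in ball 0 R, (w - a)⁻¹ • dbar g w = -π • g a := by
    rw [← integral_inv_sub_smul_dbar hg hcs]
    refine setIntegral_eq_integral_of_forall_compl_eq_zero fun w hw ↦ ?_
    rw [dbar_eq_zero_of_notMem_tsupport fun h ↦ hw (hs h), smul_zero]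
  rw [integral_add hdint hGint, hformula, neg_smul, ← Complex.coe_smul, smul_add, smul_neg,
    inv_smul_smul₀ (ofReal_ne_zero.2 Real.pi_ne_zero)]
  abel

lemma norm_sub_integral_le {g G : ℂ → E} (hg : ContDiff ℝ 1 g) (hG : Continuous G) {R δ : ℝ}
    (hs : tsupport g ⊆ ball 0 R) {a : ℂ} (ha : a ∈ ball 0 R)
    (h : ∀ w, ‖dbar g w - (a - w) • G w‖ ≤ δ) :
    ‖g a - (π : ℂ)⁻¹ • ∫ w in ball 0 R, G w‖
      ≤ π⁻¹ * (δ * ∫ w in ball (0 : ℂ) (2 * R), ‖w‖⁻¹) := by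
  have hbound : ∀ w ≠ a, ‖(w - a)⁻¹ • dbar g w + G w‖ ≤ δ * ‖w - a‖⁻¹ := fun w hw ↦ by
    have hfactor : (w - a)⁻¹ • dbar g w + G w = (w - a)⁻¹ • (dbar g w - (a - w) • G w) := by
      rw [smul_sub, smul_smul, ← neg_sub w a, mul_neg, inv_mul_cancel₀ (sub_ne_zero.2 hw)]
      simp
    rw [hfactor, norm_smul, norm_inv, mul_comm]
    exact mul_le_mul_of_nonneg_right (h w) (inv_nonneg.2 (norm_nonneg _))
  rw [sub_integral_eq_neg_integral_inv_sub_smul_dbar_add hg hG hs, norm_neg,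
    norm_smul, norm_inv, norm_real, Real.norm_of_nonneg Real.pi_pos.le]
  gcongr
  calc ‖∫ w in ball 0 R, ((w - a)⁻¹ • dbar g w + G w)‖
      ≤ ∫ w in ball 0 R, δ * ‖w - a‖⁻¹ :=
        norm_integral_le_of_norm_le ((integrableOn_ball_norm_sub_inv a 0 R).const_mul δ)
          (ae_restrict_of_ae ((ae_iff.2 (by simp)).mono hbound))
    _ ≤ δ * ∫ w in ball (0 : ℂ) (2 * R), ‖w‖⁻¹ := by
        rw [integral_const_mul]
        exact mul_le_mul_of_nonneg_left (integral_ball_norm_sub_inv_le ha)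
          ((norm_nonneg _).trans (h 0))

end CauchyPompeiu

section Gluing

open scoped Real ContDiff

lemma exists_contDiff_partition_of_isCompact {F : Type*} [NormedAddCommGroup F] [NormedSpace ℝ F]
    [FiniteDimensional ℝ F] {K : Set F} (hK : IsCompact K) {r : F → ℝ} (hr : ∀ x, 0 < r x) :
    ∃ (t : Finset F) (χ : t → F → ℂ), (∀ i, ContDiff ℝ ∞ (χ i)) ∧
      (∀ i, tsupport (χ i) ⊆ ball i (r i)) ∧ ∀ x ∈ K, ∑ i, χ i x = 1 ∧ ∑ i, ‖χ i x‖ = 1 := by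
  obtain ⟨t, ht⟩ := hK.elim_finite_subcover (fun x ↦ ball x (r x)) (fun _ ↦ isOpen_ball)
    fun x _ ↦ mem_iUnion.2 ⟨x, mem_ball_self (hr x)⟩
  obtain ⟨f, hf⟩ := SmoothPartitionOfUnity.exists_isSubordinate 𝓘(ℝ, F) hK.isClosed
    (fun i : t ↦ ball (i : F) (r i)) (fun _ ↦ isOpen_ball) (by simpa only [iUnion_subtype] using ht)
  have hsupp (i : t) : tsupport (fun x ↦ (f i x : ℂ)) ⊆ tsupport (f i) :=
    closure_mono fun x hx h ↦ hx (by simp only [h, Complex.ofReal_zero])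
  refine ⟨t, fun i x ↦ f i x, fun i ↦ ?_, fun i ↦ (hsupp i).trans (hf i), fun x hx ↦ ?_⟩
  · exact Complex.ofRealCLM.contDiff.comp (contMDiff_iff_contDiff.1 (f i).contMDiff)
  · have hsum : ∑ i, f i x = 1 := by rw [← finsum_eq_sum_of_fintype, f.sum_eq_one hx]
    refine ⟨by simp only [← Complex.ofReal_sum, hsum, Complex.ofReal_one], ?_⟩
    simpa only [Complex.norm_real, Real.norm_of_nonneg (f.nonneg _ _)] using hsum

variable {B : Type*} [NormedCommRing B] [NormedAlgebra ℂ B]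

/-- The closed ideal generated by `z - ζ`; the characters of its quotient are those characters of
`B` which take the value `ζ` at `z`. -/
def evalIdeal (z : B) (ζ : ℂ) : Ideal B := (Ideal.span {z - algebraMap ℂ B ζ}).closure

instance isClosed_evalIdeal (z : B) (ζ : ℂ) : IsClosed (evalIdeal z ζ : Set B) := by
  rw [evalIdeal, Ideal.coe_closure]
  exact isClosed_closure

/-- Evaluation of the elements of `B` on the fibre `z = ζ`: the continuous quotient homomorphism
by `evalIdeal z ζ`. -/
def evalMk (z : B) (ζ : ℂ) : B →A[ℂ] B ⧸ evalIdeal z ζ where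
  toAlgHom := Ideal.Quotient.mkₐ ℂ (evalIdeal z ζ)
  cont := continuous_quot_mk

lemma evalMk_surjective (z : B) (ζ : ℂ) : Function.Surjective (evalMk z ζ) :=
  Ideal.Quotient.mk_surjective

lemma norm_evalMk_le (z a : B) (ζ : ℂ) : ‖evalMk z ζ a‖ ≤ ‖a‖ :=
  Ideal.Quotient.norm_mk_le _ _

lemma evalMk_eq_zero_iff {z a : B} {ζ : ℂ} :
    evalMk z ζ a = 0 ↔ ∀ ε > 0, ∃ c, ‖a - (z - algebraMap ℂ B ζ) * c‖ < ε := by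
  have hmk : evalMk z ζ a = Ideal.Quotient.mk (evalIdeal z ζ) a := rfl
  rw [hmk, Ideal.Quotient.eq_zero_iff_mem, ← SetLike.mem_coe, evalIdeal, Ideal.coe_closure,
    Metric.mem_closure_iff]
  simp only [SetLike.mem_coe, Ideal.mem_span_singleton', dist_eq_norm, exists_exists_eq_and,
    mul_comm (z - algebraMap ℂ B ζ)]

lemma evalMk_self (z : B) (ζ : ℂ) : evalMk z ζ z = algebraMap ℂ _ ζ := by
  rw [← AlgHomClass.commutes (evalMk z ζ), ← sub_eq_zero, ← map_sub, evalMk_eq_zero_iff]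
  exact fun ε hε ↦ ⟨1, by simpa using hε⟩

lemma evalMk_sub_algebraMap_mul (z c : B) (ζ ξ : ℂ) :
    evalMk z ζ ((z - algebraMap ℂ B ξ) * c) = (ζ - ξ) • evalMk z ζ c := by
  rw [map_mul, map_sub, evalMk_self, AlgHomClass.commutes, ← map_sub, Algebra.smul_def]

lemma exists_norm_sub_mul_lt {z a : B} {ζ : ℂ} {ε : ℝ} (h : ‖evalMk z ζ a‖ < ε) :
    ∃ c, ‖a - (z - algebraMap ℂ B ζ) * c‖ < ε := by
  obtain ⟨a', ha', hnorm⟩ := Ideal.Quotient.norm_mk_lt (evalMk z ζ a) (half_pos (sub_pos.2 h))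
  obtain ⟨c, hc⟩ := (evalMk_eq_zero_iff (a := a - a')).1 (sub_eq_zero.2 ha'.symm) _
    (half_pos (sub_pos.2 h))
  refine ⟨c, ?_⟩
  calc ‖a - (z - algebraMap ℂ B ζ) * c‖
      = ‖(a - a' - (z - algebraMap ℂ B ζ) * c) + a'‖ := by congr 1; ring
    _ ≤ _ := norm_add_le _ _
    _ < ε := by linarith

lemma eventually_norm_evalMk_lt {z a : B} {ζ₀ : ℂ} {ε : ℝ} (h : ‖evalMk z ζ₀ a‖ < ε) :
    ∀ᶠ ζ in 𝓝 ζ₀, ‖evalMk z ζ a‖ < ε := by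
  obtain ⟨c, hc⟩ := exists_norm_sub_mul_lt h
  have hcont : Continuous fun ζ ↦ ‖a - (z - algebraMap ℂ B ζ) * c‖ := by
    fun_prop
  filter_upwards [hcont.continuousAt.eventually_lt continuousAt_const hc] with ζ hζ
  have hmk : evalMk z ζ a = evalMk z ζ (a - (z - algebraMap ℂ B ζ) * c) := by
    rw [map_sub, evalMk_sub_algebraMap_mul, sub_self, zero_smul, sub_zero]
  exact hmk ▸ (norm_evalMk_le _ _ _).trans_lt hζ

lemma exists_continuous_norm_sub_mul_lt {z : B} {D : ℂ → B} (hD : Continuous D) {δ : ℝ}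
    (h : ∀ ζ, ‖evalMk z ζ (D ζ)‖ < δ) :
    ∃ G : C(ℂ, B), ∀ ζ, ‖D ζ - (z - algebraMap ℂ B ζ) * G ζ‖ < δ := by
  refine exists_continuous_forall_mem_convex_of_local_const
    (t := fun ζ ↦ {c : B | ‖D ζ - (z - algebraMap ℂ B ζ) * c‖ < δ}) (fun ζ ↦ ?_) fun ζ ↦ ?_
  · have hpre : {c : B | ‖D ζ - (z - algebraMap ℂ B ζ) * c‖ < δ}
        = LinearMap.mulLeft ℝ (z - algebraMap ℂ B ζ) ⁻¹' ball (D ζ) δ := by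
      ext c
      simp [dist_eq_norm, norm_sub_rev (D ζ)]
    exact hpre ▸ (convex_ball (D ζ) δ).linear_preimage _
  · obtain ⟨c, hc⟩ := exists_norm_sub_mul_lt (h ζ)
    have hcont : Continuous fun ζ ↦ ‖D ζ - (z - algebraMap ℂ B ζ) * c‖ := by fun_prop
    exact ⟨c, hcont.continuousAt.eventually_lt continuousAt_const hc⟩

lemma norm_evalMk_sum_dbar_smul_le {z : B} {ι : Type*} [Fintype ι] {χ : ι → ℂ → ℂ}
    (hχ : ∀ i, Differentiable ℝ (χ i)) {ζ : ℂ} (hsum : ∀ᶠ w in 𝓝 ζ, ∑ i, χ i w = 1) {a : ι → B}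
    {e : B ⧸ evalIdeal z ζ} {η : ℝ} (ha : ∀ i, ζ ∈ tsupport (χ i) → ‖evalMk z ζ (a i) - e‖ ≤ η) :
    ‖evalMk z ζ (∑ i, dbar (χ i) ζ • a i)‖ ≤ (∑ i, ‖dbar (χ i) ζ‖) * η := by
  have hdsum : ∑ i, dbar (χ i) ζ = 0 := by
    have h := dbar_sum_smul (fun i (_ : i ∈ Finset.univ) ↦ hχ i) (fun _ ↦ (1 : ℂ)) ζ
    simp only [smul_eq_mul, mul_one] at h
    rw [← h, dbar_eq_zero_of_eventuallyEq_const hsum]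
  have hsub : evalMk z ζ (∑ i, dbar (χ i) ζ • a i)
      = ∑ i, dbar (χ i) ζ • (evalMk z ζ (a i) - e) := by
    simp only [map_sum, map_smul, smul_sub, Finset.sum_sub_distrib, ← Finset.sum_smul, hdsum,
      zero_smul, sub_zero]
  rw [hsub, Finset.sum_mul]
  refine norm_sum_le_of_le _ fun i _ ↦ ?_
  rw [norm_smul]
  by_cases hi : ζ ∈ tsupport (χ i)
  · exact mul_le_mul_of_nonneg_left (ha i hi) (norm_nonneg _)
  · simp [dbar_eq_zero_of_notMem_tsupport hi]

lemma norm_sum_smul_sub_le {E : Type*} [SeminormedAddCommGroup E] [NormedSpace ℂ E] {ι : Type*}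
    [Fintype ι] {c : ι → ℂ} (hsum : ∑ i, c i = 1) (hnorm : ∑ i, ‖c i‖ = 1) {x : ι → E} {e : E}
    {η : ℝ} (hx : ∀ i, c i ≠ 0 → ‖x i - e‖ ≤ η) : ‖∑ i, c i • x i - e‖ ≤ η := by
  have hsub : ∑ i, c i • x i - e = ∑ i, c i • (x i - e) := by
    simp only [smul_sub, Finset.sum_sub_distrib, ← Finset.sum_smul, hsum, one_smul]
  rw [hsub, ← one_mul η, ← hnorm, Finset.sum_mul]
  refine norm_sum_le_of_le _ fun i _ ↦ ?_
  rw [norm_smul]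
  by_cases hi : c i = 0
  · simp [hi]
  · exact mul_le_mul_of_nonneg_left (hx i hi) (norm_nonneg _)

variable [CompleteSpace B]

lemma subsingleton_quotient_evalIdeal {z : B} {ζ : ℂ} (h : ‖z‖ < ‖ζ‖) :
    Subsingleton (B ⧸ evalIdeal z ζ) := by
  have hζ : ζ ≠ 0 := norm_pos_iff.1 ((norm_nonneg z).trans_lt h)
  have hunit : IsUnit (1 - ζ⁻¹ • z) := by
    refine isUnit_one_sub_of_norm_lt_one ?_
    rwa [norm_smul, norm_inv, inv_mul_lt_one₀ (norm_pos_iff.2 hζ)]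
  have hzero : evalMk z ζ (1 - ζ⁻¹ • z) = 0 := by
    rw [map_sub, map_one, map_smul, evalMk_self, Algebra.algebraMap_eq_smul_one,
      inv_smul_smul₀ hζ, sub_self]
  exact subsingleton_of_zero_eq_one (isUnit_zero_iff.1 (hzero ▸ hunit.map (evalMk z ζ)))

lemma exists_forall_norm_evalMk_sum_dbar_smul_lt {z : B} {ι : Type*} [Fintype ι] {χ : ι → ℂ → ℂ}
    (hχ : ∀ i, ContDiff ℝ 1 (χ i)) {R : ℝ} (hR : ‖z‖ < R)
    (hsum : ∀ ζ ∈ ball 0 R, ∑ i, χ i ζ = 1) {δ : ℝ} (hδ : 0 < δ) :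
    ∃ η > 0, ∀ (e : ∀ ζ, B ⧸ evalIdeal z ζ) (a : ι → B),
      (∀ i, ∀ ζ ∈ tsupport (χ i), ‖evalMk z ζ (a i) - e ζ‖ ≤ η) →
        ∀ ζ, ‖evalMk z ζ (∑ i, dbar (χ i) ζ • a i)‖ < δ := by
  obtain ⟨M, hM⟩ : ∃ M, ∀ ζ ∈ closedBall (0 : ℂ) ‖z‖, ‖∑ i, ‖dbar (χ i) ζ‖‖ ≤ M :=
    (isCompact_closedBall 0 ‖z‖).exists_bound_of_continuousOn
      (continuous_finsetSum _ fun i _ ↦ (continuous_dbar (hχ i)).norm).continuousOn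
  obtain ⟨η, hη, hηδ⟩ := exists_pos_mul_lt hδ M
  refine ⟨η, hη, fun e a ha ζ ↦ ?_⟩
  rcases lt_or_ge ‖z‖ ‖ζ‖ with hζ | hζ
  · have := subsingleton_quotient_evalIdeal hζ
    rwa [Subsingleton.elim (evalMk z ζ _) 0, norm_zero]
  have hsum' : ∀ᶠ w in 𝓝 ζ, ∑ i, χ i w = 1 :=
    mem_of_superset (isOpen_ball.mem_nhds (mem_ball_zero_iff.2 (hζ.trans_lt hR))) hsum
  calc ‖evalMk z ζ (∑ i, dbar (χ i) ζ • a i)‖ ≤ (∑ i, ‖dbar (χ i) ζ‖) * η :=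
        norm_evalMk_sum_dbar_smul_le (fun i ↦ (hχ i).differentiable one_ne_zero) hsum'
          fun i hi ↦ ha i ζ hi
    _ ≤ M * η := by
        gcongr
        exact (Real.le_norm_self _).trans (hM ζ (mem_closedBall_zero_iff.2 hζ))
    _ < δ := hηδ

lemma exists_norm_sum_smul_evalMk_sub_le {z : B} {ι : Type*} [Fintype ι] {χ : ι → ℂ → ℂ}
    (hχ : ∀ i, ContDiff ℝ 1 (χ i)) {R : ℝ} (hR : ‖z‖ < R) (hsupp : ∀ i, tsupport (χ i) ⊆ ball 0 R)
    {a : ι → B} {δ : ℝ} (h : ∀ ζ, ‖evalMk z ζ (∑ i, dbar (χ i) ζ • a i)‖ < δ) :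
    ∃ b, ∀ ζ, ‖∑ i, χ i ζ • evalMk z ζ (a i) - evalMk z ζ b‖
      ≤ π⁻¹ * (δ * ∫ w in ball (0 : ℂ) (2 * R), ‖w‖⁻¹) := by
  obtain ⟨G, hG⟩ := exists_continuous_norm_sub_mul_lt
    (continuous_finsetSum _ fun i _ ↦ (continuous_dbar (hχ i)).fun_smul continuous_const) h
  have hGint : MeasureTheory.IntegrableOn G (ball (0 : ℂ) R) :=
    (G.continuous.continuousOn.integrableOn_compact (isCompact_closedBall 0 R)).mono_set
      ball_subset_closedBall
  refine ⟨(π : ℂ)⁻¹ • ∫ w in ball (0 : ℂ) R, G w, fun ζ ↦ ?_⟩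
  rcases lt_or_ge ‖z‖ ‖ζ‖ with hζ | hζ
  · have := subsingleton_quotient_evalIdeal hζ
    rw [Subsingleton.elim (_ - _) (0 : B ⧸ evalIdeal z ζ), norm_zero]
    have hδ : 0 ≤ δ := (norm_nonneg _).trans (h 0).le
    have hJ : 0 ≤ ∫ w in ball (0 : ℂ) (2 * R), ‖w‖⁻¹ :=
      MeasureTheory.integral_nonneg fun w ↦ inv_nonneg.2 (norm_nonneg w)
    exact mul_nonneg (inv_nonneg.2 Real.pi_pos.le) (mul_nonneg hδ hJ)
  have hint : evalMk z ζ (∫ w in ball (0 : ℂ) R, G w)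
      = ∫ w in ball (0 : ℂ) R, evalMk z ζ (G w) :=
    ((evalMk z ζ).toContinuousLinearMap.integral_comp_comm hGint).symm
  rw [map_smul, hint]
  refine norm_sub_integral_le (g := fun w ↦ ∑ i, χ i w • evalMk z ζ (a i))
    (ContDiff.sum fun i _ ↦ (hχ i).fun_smul contDiff_const)
    ((evalMk z ζ).continuous.comp G.continuous) ?_ (mem_ball_zero_iff.2 (hζ.trans_lt hR)) fun w ↦ ?_
  · refine (closure_minimal (fun w hw ↦ ?_)
      (isClosed_iUnion_of_finite fun i ↦ isClosed_tsupport (χ i))).trans (iUnion_subset hsupp)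
    obtain ⟨i, -, hi⟩ := Finset.exists_ne_zero_of_sum_ne_zero hw
    exact mem_iUnion.2 ⟨i, subset_tsupport _ (smul_ne_zero_iff.1 hi).1⟩
  · have hmk : ∑ i, dbar (χ i) w • evalMk z ζ (a i) - (ζ - w) • evalMk z ζ (G w)
        = evalMk z ζ (∑ i, dbar (χ i) w • a i - (z - algebraMap ℂ B w) * G w) := by
      simp only [map_sub, map_sum, map_smul, evalMk_sub_algebraMap_mul]
    rw [dbar_sum_smul fun i _ ↦ (hχ i).differentiable one_ne_zero]
    exact hmk ▸ (norm_evalMk_le _ _ _).trans (hG w).le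

/- The Cousin problem for the fibres: `∑ χᵢ aᵢ` is corrected by an approximate solution of a
`∂̄`-equation whose right hand side `∑ ∂̄χᵢ aᵢ` is small on every fibre, because `∑ ∂̄χᵢ = 0`. -/
theorem exists_norm_evalMk_sub_le_of_locally {z : B} (e : ∀ ζ, B ⧸ evalIdeal z ζ)
    (hloc : ∀ ζ₀, ∃ r > 0, ∀ η > 0, ∃ a, ∀ ζ ∈ ball ζ₀ r, ‖evalMk z ζ a - e ζ‖ ≤ η) {ε : ℝ}
    (hε : 0 < ε) : ∃ a, ∀ ζ, ‖evalMk z ζ a - e ζ‖ ≤ ε := by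
  choose r hr hloc using hloc
  obtain ⟨t, χ, hχ, hχr, hχ1⟩ :=
    exists_contDiff_partition_of_isCompact (isCompact_closedBall (0 : ℂ) (‖z‖ + 1)) hr
  replace hχ (i) : ContDiff ℝ 1 (χ i) := (hχ i).of_le (by exact_mod_cast le_top)
  obtain ⟨R, hzR, hR⟩ : ∃ R, ‖z‖ < R ∧ ⋃ i, tsupport (χ i) ⊆ ball 0 R :=
    (Bornology.isBounded_iUnion.2 fun i ↦ isBounded_ball.subset (hχr i)).subset_ball_lt ‖z‖ 0
  obtain ⟨δ, hδ, hδε⟩ :=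
    exists_pos_mul_lt (half_pos hε) (π⁻¹ * ∫ w in ball (0 : ℂ) (2 * R), ‖w‖⁻¹)
  obtain ⟨η, hη, hηδ⟩ := exists_forall_norm_evalMk_sum_dbar_smul_lt hχ (lt_add_one ‖z‖)
    (fun ζ hζ ↦ (hχ1 ζ (ball_subset_closedBall hζ)).1) hδ
  choose a ha using fun i : t ↦ hloc i (min η (ε / 2)) (by positivity)
  replace ha (i) (ζ) (hζ : ζ ∈ tsupport (χ i)) := ha i ζ (hχr i hζ)
  obtain ⟨b, hb⟩ := exists_norm_sum_smul_evalMk_sub_le hχ hzR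
    (fun i ↦ (subset_iUnion _ i).trans hR)
    (hηδ e a fun i ζ hζ ↦ (ha i ζ hζ).trans (min_le_left _ _))
  refine ⟨b, fun ζ ↦ ?_⟩
  rcases lt_or_ge ‖z‖ ‖ζ‖ with hζ | hζ
  · have := subsingleton_quotient_evalIdeal hζ
    rw [Subsingleton.elim (evalMk z ζ b) (e ζ), sub_self, norm_zero]
    exact hε.le
  obtain ⟨hsum, hnorm⟩ := hχ1 ζ (mem_closedBall_zero_iff.2 (by linarith))
  have hnear := norm_sum_smul_sub_le hsum hnorm fun i hi ↦
    (ha i ζ (subset_tsupport _ hi)).trans (min_le_right _ _)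
  have hbζ := hb ζ
  rw [norm_sub_rev] at hbζ
  linarith [norm_sub_le_norm_sub_add_norm_sub (evalMk z ζ b) (∑ i, χ i ζ • evalMk z ζ (a i)) (e ζ)]

end Gluing

section Shilov

open WeakDual

section CharacterComap

variable {B Q : Type*} [NormedCommRing B] [NormedAlgebra ℂ B] [NormedCommRing Q]
  [NormedAlgebra ℂ Q]

/-- Composition of a character with a continuous algebra homomorphism. -/
def characterComap (g : B →A[ℂ] Q) (ψ : characterSpace ℂ Q) : characterSpace ℂ B :=
  ⟨(CharacterSpace.toCLM ψ).comp g.toContinuousLinearMap, by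
    rw [CharacterSpace.eq_set_map_one_map_mul]
    exact ⟨(congrArg ψ (map_one g)).trans (map_one ψ),
      fun x y ↦ (congrArg ψ (map_mul g x y)).trans (map_mul ψ _ _)⟩⟩

lemma characterComap_apply (g : B →A[ℂ] Q) (ψ : characterSpace ℂ Q) (b : B) :
    characterComap g ψ b = ψ (g b) :=
  rfl

lemma continuous_character_apply (b : B) : Continuous fun φ : characterSpace ℂ B ↦ φ b :=
  (WeakDual.eval_continuous b).comp continuous_subtype_val

lemma continuous_characterComap (g : B →A[ℂ] Q) : Continuous (characterComap g) :=
  Continuous.subtype_mk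
    (WeakDual.continuous_of_continuous_eval fun b ↦ continuous_character_apply (g b)) _

lemma characterComap_injective {g : B →A[ℂ] Q} (hg : Function.Surjective g) :
    Function.Injective (characterComap g) := fun _ _ h ↦
  DFunLike.ext _ _ <| hg.forall.2 fun b ↦ DFunLike.congr_fun h b

end CharacterComap

variable {B : Type*} [NormedCommRing B] [NormedAlgebra ℂ B]

lemma characterComap_evalMk_self (z : B) {ζ : ℂ} (ψ : characterSpace ℂ (B ⧸ evalIdeal z ζ)) :
    characterComap (evalMk z ζ) ψ z = ζ := by
  rw [characterComap_apply, evalMk_self, AlgHomClass.commutes, Algebra.algebraMap_self_apply]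

variable [CompleteSpace B]

lemma character_eq_zero_of_evalMk_eq_zero {z a : B} {φ : characterSpace ℂ B}
    (ha : evalMk z (φ z) a = 0) : φ a = 0 := by
  refine norm_le_zero_iff.1 (le_of_forall_pos_lt_add fun ε hε ↦ ?_)
  obtain ⟨c, hc⟩ := evalMk_eq_zero_iff.1 ha ε hε
  calc ‖φ a‖ = ‖φ (a - (z - algebraMap ℂ B (φ z)) * c)‖ := by
        simp [AlgHomClass.commutes]
    _ ≤ ‖a - (z - algebraMap ℂ B (φ z)) * c‖ := norm_character_apply_le φ _
    _ < 0 + ε := by rwa [zero_add]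

lemma exists_characterComap_evalMk_eq (z : B) (φ : characterSpace ℂ B) :
    ∃ ψ, characterComap (evalMk z (φ z)) ψ = φ :=
  ⟨CharacterSpace.equivAlgHom.symm (Ideal.Quotient.liftₐ (evalIdeal z (φ z))
    (CharacterSpace.equivAlgHom φ) fun _ ha ↦
      character_eq_zero_of_evalMk_eq_zero (Ideal.Quotient.eq_zero_iff_mem.2 ha)), rfl⟩

lemma eventually_norm_character_sub_indicator_lt {z b : B} {V : Set (characterSpace ℂ B)}
    (hV : IsClopen V) {ζ₀ : ℂ} (h : ∀ φ : characterSpace ℂ B, φ z = ζ₀ → φ b = V.indicator 1 φ)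
    {ε : ℝ} (hε : 0 < ε) :
    ∀ᶠ ζ in 𝓝 ζ₀, ∀ φ : characterSpace ℂ B, φ z = ζ → ‖φ b - V.indicator 1 φ‖ < ε := by
  refine (continuous_character_apply z).isClosedMap.eventually_nhds_fiber ζ₀ fun φ hφ ↦ ?_
  have hcont : Continuous fun φ : characterSpace ℂ B ↦ ‖φ b - V.indicator 1 φ‖ :=
    ((continuous_character_apply b).sub (hV.continuous_indicator continuous_const)).norm
  refine hcont.continuousAt.eventually_lt continuousAt_const ?_
  rwa [h φ hφ, sub_self, norm_zero]

lemma eq_idemSum_of_norm_character_sub_indicator_le {z b : B} {V : Set (characterSpace ℂ B)}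
    {ζ : ℂ} (hb : ∀ φ : characterSpace ℂ B, φ z = ζ → ‖φ b - V.indicator 1 φ‖ ≤ 1 / 25)
    {e : B ⧸ evalIdeal z ζ} (he : IsIdempotentElem e)
    (heV : ∀ ψ, ψ e = V.indicator 1 (characterComap (evalMk z ζ) ψ)) :
    e = idemSum (evalMk z ζ b) := by
  obtain ⟨hidem, hchar⟩ := idemSum_of_norm_character_sub_indicator_le
    (V := characterComap (evalMk z ζ) ⁻¹' V) fun ψ ↦ hb _ (characterComap_evalMk_self z ψ)
  exact eq_of_isIdempotentElem_of_character_eq he hidem fun ψ ↦ (heV ψ).trans (hchar ψ).symm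

lemma exists_norm_evalMk_idemPartialSum_sub_idemSum_le (z b : B) {r : ℝ} (hr : 0 ≤ r) (hr1 : r < 1)
    {η : ℝ} (hη : 0 < η) :
    ∃ N, ∀ ζ, ‖evalMk z ζ (4 * (b ^ 2 - b))‖ ≤ r →
      ‖evalMk z ζ (idemPartialSum N b) - idemSum (evalMk z ζ b)‖ ≤ η := by
  have hlim : Tendsto (fun N ↦ 2⁻¹ * (‖2 * b - 1‖ * (r ^ N / (1 - r)))) atTop (𝓝 0) := by
    simpa using (((tendsto_pow_atTop_nhds_zero_of_lt_one hr hr1).div_const (1 - r)).const_mul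
      ‖2 * b - 1‖).const_mul 2⁻¹
  obtain ⟨N, hNη, hN⟩ := ((hlim.eventually_lt_const hη).and (eventually_ge_atTop 1)).exists
  refine ⟨N, fun ζ hζ ↦ ?_⟩
  have hsub : 2 * evalMk z ζ b - 1 = evalMk z ζ (2 * b - 1) := by simp [map_ofNat]
  rw [map_idemPartialSum, norm_sub_rev]
  refine (norm_idemSum_sub_idemPartialSum_le hr1 ?_ hN).trans (le_trans ?_ hNη.le)
  · simpa [map_ofNat] using hζ
  · have : 0 < 1 - r := sub_pos.2 hr1
    rw [hsub]
    gcongr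
    exact norm_evalMk_le _ _ _

lemma exists_locally_norm_evalMk_sub_le {z : B} {V : Set (characterSpace ℂ B)} (hV : IsClopen V)
    {e : ∀ ζ, B ⧸ evalIdeal z ζ} (he : ∀ ζ, IsIdempotentElem (e ζ))
    (heV : ∀ ζ ψ, ψ (e ζ) = V.indicator 1 (characterComap (evalMk z ζ) ψ)) (ζ₀ : ℂ) :
    ∃ r > 0, ∀ η > 0, ∃ a, ∀ ζ ∈ ball ζ₀ r, ‖evalMk z ζ a - e ζ‖ ≤ η := by
  obtain ⟨b, hb⟩ := evalMk_surjective z ζ₀ (e ζ₀)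
  have hbV (φ : characterSpace ℂ B) (hφ : φ z = ζ₀) : φ b = V.indicator 1 φ := by
    subst hφ
    obtain ⟨ψ, hψ⟩ := exists_characterComap_evalMk_eq z φ
    rw [← hψ, characterComap_apply, hψ, hb, heV, hψ]
  have hzero : evalMk z ζ₀ (4 * (b ^ 2 - b)) = 0 := by
    rw [map_mul, map_sub, map_pow, hb, pow_two, (he ζ₀).eq, sub_self, mul_zero]
  obtain ⟨r, hr, hball⟩ := Metric.eventually_nhds_iff_ball.1
    ((eventually_norm_evalMk_lt (ε := 2⁻¹) (by rw [hzero, norm_zero]; norm_num)).and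
      (eventually_norm_character_sub_indicator_lt hV hbV (ε := 1 / 25) (by norm_num)))
  refine ⟨r, hr, fun η hη ↦ ?_⟩
  obtain ⟨N, hN⟩ := exists_norm_evalMk_idemPartialSum_sub_idemSum_le z b (r := 2⁻¹) (by norm_num)
    (by norm_num) hη
  refine ⟨idemPartialSum N b, fun ζ hζ ↦ ?_⟩
  obtain ⟨hsmall, hclose⟩ := hball ζ hζ
  rw [eq_idemSum_of_norm_character_sub_indicator_le (fun φ hφ ↦ (hclose φ hφ).le) (he ζ) (heV ζ)]
  exact hN ζ hsmall.le

lemma exists_idempotent_of_fiberwise {z : B} {V : Set (characterSpace ℂ B)} (hV : IsClopen V)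
    (h : ∀ ζ, ∃ e, IsIdempotentElem e ∧
      ∀ ψ, ψ e = V.indicator (1 : characterSpace ℂ B → ℂ) (characterComap (evalMk z ζ) ψ)) :
    ∃ e, IsIdempotentElem e ∧ ∀ φ : characterSpace ℂ B, φ e = V.indicator 1 φ := by
  choose e he heV using h
  obtain ⟨a, ha⟩ := exists_norm_evalMk_sub_le_of_locally e
    (exists_locally_norm_evalMk_sub_le hV he heV) (ε := 1 / 25) (by norm_num)
  refine ⟨idemSum a, idemSum_of_norm_character_sub_indicator_le fun φ ↦ ?_⟩
  obtain ⟨ψ, hψ⟩ := exists_characterComap_evalMk_eq z φ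
  calc ‖φ a - V.indicator 1 φ‖ = ‖ψ (evalMk z (φ z) a - e (φ z))‖ := by
        rw [map_sub, heV, hψ, ← characterComap_apply, hψ]
    _ ≤ ‖evalMk z (φ z) a - e (φ z)‖ := norm_character_apply_le ψ _
    _ ≤ 1 / 25 := ha _

/- Shilov's idempotent theorem for finitely many separating elements: the induction removes one of
them at a time by passing to the fibres of its Gelfand transform. -/
theorem exists_idempotent_of_isClopen {n : ℕ} (z : Fin n → B)
    (hz : ∀ φ ψ : characterSpace ℂ B, (∀ j, φ (z j) = ψ (z j)) → φ = ψ)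
    {V : Set (characterSpace ℂ B)} (hV : IsClopen V) :
    ∃ e, IsIdempotentElem e ∧ ∀ φ : characterSpace ℂ B, φ e = V.indicator 1 φ := by
  induction n generalizing B with
  | zero =>
    have : Subsingleton (characterSpace ℂ B) := ⟨fun φ ψ ↦ hz φ ψ fun j ↦ j.elim0⟩
    rcases V.eq_empty_or_nonempty with rfl | hne
    · exact ⟨0, .zero, fun φ ↦ by simp⟩
    · exact ⟨1, .one, fun φ ↦ by simp [this.eq_univ_of_nonempty hne]⟩
  | succ n ih =>
    refine exists_idempotent_of_fiberwise (z := z 0) hV fun ζ ↦ ?_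
    refine ih (fun j ↦ evalMk (z 0) ζ (z j.succ)) (fun ψ ψ' h ↦ ?_)
      (hV.preimage (continuous_characterComap (evalMk (z 0) ζ)))
    refine characterComap_injective (evalMk_surjective (z 0) ζ) (hz _ _ (Fin.cases ?_ h))
    rw [characterComap_evalMk_self, characterComap_evalMk_self]

end Shilov

section Hefer

variable {E : Type*} [NormedAddCommGroup E] [NormedSpace ℂ E]

lemma sub_smul_add_smul_mem {X : Set E} (hXc : Convex ℝ X) {a z : E} (ha : a ∈ X) (hz : z ∈ X)
    {t : ℝ} (ht : t ∈ uIcc 0 1) : (1 - (t : ℂ)) • a + (t : ℂ) • z ∈ X := by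
  rw [uIcc_of_le zero_le_one] at ht
  exact_mod_cast hXc ha hz (sub_nonneg.2 ht.2) ht.1 (sub_add_cancel 1 t)

lemma fderiv_apply_eq_circleIntegral {U : Set E} (hU : IsOpen U) {g : E → ℂ}
    (hg : DifferentiableOn ℂ g U) {w v : E} {ρ : ℝ} (hρ : 0 < ρ)
    (hmem : ∀ ζ ∈ closedBall (0 : ℂ) ρ, ζ • v + w ∈ U) :
    (2 * Real.pi * Complex.I) • fderiv ℂ g w v
      = ∮ ζ in C(0, ρ), (1 / (ζ - 0) ^ 2) • g (ζ • v + w) := by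
  have hderiv : HasDerivAt (fun ζ : ℂ ↦ g (ζ • v + w)) (fderiv ℂ g w v) 0 := by
    have hline : HasDerivAt (fun ζ : ℂ ↦ ζ • v + w) v 0 := by
      simpa using ((hasDerivAt_id (0 : ℂ)).smul_const v).add_const w
    have hw : w ∈ U := by simpa using hmem 0 (mem_closedBall_self hρ.le)
    exact (hg.differentiableAt (hU.mem_nhds hw)).hasFDerivAt.comp_hasDerivAt_of_eq 0 hline (by simp)
  rw [← hderiv.deriv, DifferentiableOn.deriv_eq_smul_circleIntegral hρ]
  exact hg.comp (by fun_prop) hmem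

lemma sub_eq_integral_fderiv_segment {X : Set E} (hX : IsOpen X) (hXc : Convex ℝ X) {g : E → ℂ}
    (hg : DifferentiableOn ℂ g X) {a z : E} (ha : a ∈ X) (hz : z ∈ X)
    (hcont : ContinuousOn (fun w ↦ fderiv ℂ g w (z - a)) X) :
    g z - g a = ∫ t in (0 : ℝ)..1, fderiv ℂ g ((1 - (t : ℂ)) • a + (t : ℂ) • z) (z - a) := by
  have hmem : MapsTo (fun t : ℝ ↦ (1 - (t : ℂ)) • a + (t : ℂ) • z) (uIcc 0 1) X :=
    fun t ht ↦ sub_smul_add_smul_mem hXc ha hz ht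
  have hderiv : ∀ t ∈ uIcc (0 : ℝ) 1, HasDerivAt
      (fun t : ℝ ↦ g ((1 - (t : ℂ)) • a + (t : ℂ) • z))
      (fderiv ℂ g ((1 - (t : ℂ)) • a + (t : ℂ) • z) (z - a)) t := fun t ht ↦ by
    have hline : HasDerivAt (fun t : ℂ ↦ (1 - t) • a + t • z) (z - a) (t : ℂ) := by
      refine ((((hasDerivAt_id (t : ℂ)).const_sub 1).smul_const a).add
        ((hasDerivAt_id (t : ℂ)).smul_const z)).congr_deriv ?_
      rw [neg_one_smul, one_smul, neg_add_eq_sub]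
    exact ((hg.differentiableAt (hX.mem_nhds (hmem ht))).hasFDerivAt.comp_hasDerivAt
      (t : ℂ) hline).comp_ofReal
  rw [intervalIntegral.integral_eq_sub_of_hasDerivAt hderiv]
  · simp
  · exact (hcont.comp (by fun_prop) hmem).intervalIntegrable

variable [FiniteDimensional ℂ E]

lemma exists_thickening_norm_fderiv_le {U P : Set E} (hU : IsOpen U) {g : E → ℂ}
    (hg : DifferentiableOn ℂ g U) (hP : IsCompact P) (hPU : P ⊆ U) :
    ∃ ε > 0, thickening ε P ⊆ U ∧ ∃ M, ∀ p ∈ thickening ε P, ‖fderiv ℂ g p‖ ≤ M := by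
  have := FiniteDimensional.proper ℂ E
  obtain ⟨δ, hδ, hδU⟩ := hP.exists_cthickening_subset_open hU hPU
  obtain ⟨M, hM⟩ := (hP.cthickening (r := δ)).exists_bound_of_continuousOn
    (hg.continuousOn.mono hδU)
  have hball {p} (hp : p ∈ thickening (δ / 2) P) : ball p (δ / 2) ⊆ cthickening δ P := by
    intro q hq
    obtain ⟨y, hy, hpy⟩ := mem_thickening_iff.1 hp
    refine thickening_subset_cthickening δ P (mem_thickening_iff.2 ⟨y, hy, ?_⟩)
    linarith [dist_triangle q p y, mem_ball.1 hq]
  refine ⟨δ / 2, half_pos hδ, fun p hp ↦ hδU (hball hp (mem_ball_self (half_pos hδ))),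
    (M + M) / (δ / 2), fun p hp ↦ ?_⟩
  refine Complex.norm_fderiv_le_div_of_mapsTo_ball (hg.mono ((hball hp).trans hδU))
    (fun q hq ↦ mem_closedBall_iff_norm.2 ?_) (half_pos hδ)
  exact (norm_sub_le _ _).trans
    (add_le_add (hM q (hball hp hq)) (hM p (hball hp (mem_ball_self (half_pos hδ)))))

lemma exists_eventually_mem_and_norm_fderiv_le {U : Set E} (hU : IsOpen U) {g : E → ℂ}
    (hg : DifferentiableOn ℂ g U) {T : Set ℝ} (hT : IsCompact T) {s : ℝ → ℂ} {A : ℝ → E}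
    (hs : Continuous s) (hA : Continuous A) {w₀ : E} (hw₀ : ∀ t ∈ T, A t + s t • w₀ ∈ U) :
    ∃ M, ∀ᶠ w in 𝓝 w₀, ∀ t ∈ T, A t + s t • w ∈ U ∧ ‖fderiv ℂ g (A t + s t • w)‖ ≤ M := by
  obtain ⟨ε, hε, hεU, M, hM⟩ := exists_thickening_norm_fderiv_le hU hg
    (hT.image (f := fun t ↦ A t + s t • w₀) (by fun_prop)) (image_subset_iff.2 hw₀)
  have hcont : Continuous fun p : E × ℝ ↦ A p.2 + s p.2 • p.1 := by fun_prop
  refine ⟨M, (hT.eventually_forall_of_forall_eventually fun t ht ↦ ?_).mono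
    fun w hw t ht ↦ ⟨hεU (hw t ht), hM _ (hw t ht)⟩⟩
  exact hcont.continuousAt.eventually_mem (isOpen_thickening.mem_nhds
    (self_subset_thickening hε _ (mem_image_of_mem (fun t ↦ A t + s t • w₀) ht)))

lemma differentiableAt_integral_comp_add_smul {U : Set E} (hU : IsOpen U) {g : E → ℂ}
    (hg : DifferentiableOn ℂ g U) {a b : ℝ} {c s : ℝ → ℂ} {A : ℝ → E} (hc : Continuous c)
    (hs : Continuous s) (hA : Continuous A) {w₀ : E}
    (hw₀ : ∀ t ∈ uIcc a b, A t + s t • w₀ ∈ U) :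
    DifferentiableAt ℂ (fun w ↦ ∫ t in a..b, c t * g (A t + s t • w)) w₀ := by
  have := FiniteDimensional.proper ℂ E
  have := FiniteDimensional.proper ℂ (E →L[ℂ] ℂ)
  borelize E
  obtain ⟨M, hM⟩ := exists_eventually_mem_and_norm_fderiv_le hU hg isCompact_uIcc hs hA hw₀
  obtain ⟨C, hC⟩ := isCompact_uIcc.exists_bound_of_continuousOn
    (hc.mul hs).continuousOn (s := uIcc a b)
  have hint (w) (hw : ∀ t ∈ uIcc a b, A t + s t • w ∈ U ∧ ‖fderiv ℂ g (A t + s t • w)‖ ≤ M) :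
      IntervalIntegrable (fun t ↦ c t * g (A t + s t • w)) MeasureTheory.volume a b :=
    (hc.continuousOn.mul
      (hg.continuousOn.comp (by fun_prop) fun t ht ↦ (hw t ht).1)).intervalIntegrable
  refine (intervalIntegral.hasFDerivAt_integral_of_dominated_of_fderiv_le
    (F' := fun w t ↦ (c t * s t) • fderiv ℂ g (A t + s t • w)) (bound := fun _ ↦ C * M)
    hM (hM.mono fun w hw ↦ (hint w hw).def'.aestronglyMeasurable) (hint w₀ hM.self_of_nhds) ?_
    (Eventually.of_forall fun t ht w hw ↦ ?_) intervalIntegrable_const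
    (Eventually.of_forall fun t ht w hw ↦ ?_)).differentiableAt
  · exact (hc.mul hs).aestronglyMeasurable.smul ((measurable_fderiv ℂ g).comp
      (by fun_prop : Continuous fun t ↦ A t + s t • w₀).measurable).aestronglyMeasurable
  · have ht' := uIoc_subset_uIcc ht
    rw [norm_smul]
    exact mul_le_mul (hC t ht') (hw t ht').2 (norm_nonneg _) ((norm_nonneg _).trans (hC t ht'))
  · have hline : HasFDerivAt (fun w ↦ A t + s t • w) (s t • ContinuousLinearMap.id ℂ E) w :=
      ((hasFDerivAt_id w).const_smul (s t)).const_add (A t)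
    have hgt := hg.differentiableAt (hU.mem_nhds (hw t (uIoc_subset_uIcc ht)).1)
    refine ((hgt.hasFDerivAt.comp w hline).const_mul (c t)).congr_fderiv ?_
    ext v
    simp [mul_assoc]

lemma differentiableOn_fderiv_apply {U : Set E} (hU : IsOpen U) {g : E → ℂ}
    (hg : DifferentiableOn ℂ g U) (v : E) : DifferentiableOn ℂ (fun w ↦ fderiv ℂ g w v) U := by
  intro w₀ hw₀
  refine DifferentiableAt.differentiableWithinAt ?_
  have hcont : Continuous fun p : E × ℂ ↦ p.2 • v + p.1 := by fun_prop
  obtain ⟨ρ, hρ, hρU⟩ : ∃ ρ > 0, ∀ ζ ∈ closedBall (0 : ℂ) ρ, ζ • v + w₀ ∈ U :=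
    nhds_basis_closedBall.mem_iff.1 ((hcont.comp (Continuous.prodMk_right w₀)).continuousAt
      (hU.mem_nhds (by simpa using hw₀)))
  have hρU' : ∀ᶠ w in 𝓝 w₀, ∀ ζ ∈ closedBall (0 : ℂ) ρ, ζ • v + w ∈ U :=
    (isCompact_closedBall 0 ρ).eventually_forall_of_forall_eventually fun ζ hζ ↦
      hcont.continuousAt.eventually_mem (hU.mem_nhds (hρU ζ hζ))
  have hcircle : Continuous fun θ ↦ deriv (circleMap 0 ρ) θ * (1 / (circleMap 0 ρ θ - 0) ^ 2) := by
    simp only [deriv_circleMap, one_div, sub_zero]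
    exact (by fun_prop : Continuous _).mul
      ((by fun_prop : Continuous _).inv₀ fun θ ↦ pow_ne_zero 2 (circleMap_ne_center hρ.ne'))
  have hdiff := differentiableAt_integral_comp_add_smul hU hg (a := 0) (b := 2 * Real.pi)
    (A := fun θ ↦ circleMap 0 ρ θ • v) hcircle (continuous_const (y := 1)) (by fun_prop) (w₀ := w₀)
    fun θ _ ↦ by
      rw [one_smul]
      exact hρU _ (circleMap_mem_closedBall 0 hρ.le θ)
  refine (hdiff.const_smul (2 * Real.pi * Complex.I)⁻¹).congr_of_eventuallyEq ?_
  filter_upwards [hρU'] with w hw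
  rw [Pi.smul_apply, eq_inv_smul_iff₀ Complex.two_pi_I_ne_zero,
    fderiv_apply_eq_circleIntegral hU hg hρ hw, circleIntegral]
  simp only [smul_eq_mul, one_smul, mul_assoc]

/- Hefer's decomposition: the derivative of `g` along the segment from `a` to `z`, which is linear
in `z - a`, is integrated. -/
lemma exists_sub_eq_sum_sub_mul {n : ℕ} {X : Set (CSpace n)} (hX : IsOpen X) (hXc : Convex ℝ X)
    {g : CSpace n → ℂ} (hg : DifferentiableOn ℂ g X) {a : CSpace n} (ha : a ∈ X) :
    ∃ q : Fin n → CSpace n → ℂ, (∀ j, DifferentiableOn ℂ (q j) X) ∧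
      ∀ z ∈ X, g z - g a = ∑ j, (z j - a j) * q j z := by
  let e (j : Fin n) : CSpace n := EuclideanSpace.single j 1
  have hD := differentiableOn_fderiv_apply hX hg
  refine ⟨fun j z ↦ ∫ t in (0 : ℝ)..1, 1 * fderiv ℂ g ((1 - (t : ℂ)) • a + (t : ℂ) • z) (e j),
    fun j z hz ↦ ?_, fun z hz ↦ ?_⟩
  · exact (differentiableAt_integral_comp_add_smul hX (hD (e j)) continuous_const
      Complex.continuous_ofReal (A := fun t : ℝ ↦ (1 - (t : ℂ)) • a) (by fun_prop)
      fun t ht ↦ sub_smul_add_smul_mem hXc ha hz ht).differentiableWithinAt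
  · have hsub : z - a = ∑ j, (z j - a j) • e j := by
      ext i
      simp [e, Finset.sum_apply, Pi.single_apply]
    rw [sub_eq_integral_fderiv_segment hX hXc hg ha hz (hD (z - a)).continuousOn]
    simp only [one_mul, ← intervalIntegral.integral_const_mul]
    rw [← intervalIntegral.integral_finsetSum fun j _ ↦ ?_]
    · simp only [hsub, map_sum, map_smul, smul_eq_mul]
    · exact (((hD (e j)).continuousOn.comp (by fun_prop) fun t ht ↦
        sub_smul_add_smul_mem hXc ha hz ht).intervalIntegrable).const_mul _

end Hefer

section RestrictionAlgebra

open WeakDual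

variable {n : ℕ} {X K : Set (CSpace n)}

/-- The algebra of restrictions to `K` of holomorphic functions on `X`. -/
def holRestrict (X K : Set (CSpace n)) : Subalgebra ℂ C(K, ℂ) where
  carrier := {u | ∃ g : CSpace n → ℂ, DifferentiableOn ℂ g X ∧ ∀ x : K, u x = g x}
  mul_mem' := by
    rintro u v ⟨g, hg, hu⟩ ⟨h, hh, hv⟩
    exact ⟨g * h, hg.mul hh, fun x ↦ by simp [hu, hv]⟩
  add_mem' := by
    rintro u v ⟨g, hg, hu⟩ ⟨h, hh, hv⟩
    exact ⟨g + h, hg.add hh, fun x ↦ by simp [hu, hv]⟩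
  algebraMap_mem' c := ⟨fun _ ↦ c, differentiableOn_const c, fun _ ↦ rfl⟩

variable [CompactSpace K]

/-- The uniform closure in `C(K, ℂ)` of the restrictions to `K` of holomorphic functions on `X`. -/
abbrev UnifAlg (X K : Set (CSpace n)) [CompactSpace K] : Subalgebra ℂ C(K, ℂ) :=
  (holRestrict X K).topologicalClosure

namespace UnifAlg

instance : CompleteSpace (UnifAlg X K) :=
  (Subalgebra.isClosed_topologicalClosure (holRestrict X K)).completeSpace_coe

/-- The restriction to `K` of a holomorphic function on `X`, as an element of `UnifAlg X K`. -/
def ofHol (hKX : K ⊆ X) (g : CSpace n → ℂ) (hg : DifferentiableOn ℂ g X) : UnifAlg X K :=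
  ⟨⟨K.domRestrict g, (hg.continuousOn.mono hKX).domRestrict⟩,
    Subalgebra.le_topologicalClosure _ ⟨g, hg, fun _ ↦ rfl⟩⟩

@[simp]
lemma ofHol_apply (hKX : K ⊆ X) {g : CSpace n → ℂ} (hg : DifferentiableOn ℂ g X) (x : K) :
    (ofHol hKX g hg : C(K, ℂ)) x = g x := rfl

lemma exists_norm_sub_ofHol_lt (hKX : K ⊆ X) (b : UnifAlg X K) {ε : ℝ} (hε : 0 < ε) :
    ∃ g hg, ‖b - ofHol hKX g hg‖ < ε := by
  obtain ⟨u, ⟨g, hg, hu⟩, hbu⟩ := Metric.mem_closure_iff.1 b.2 ε hε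
  obtain rfl : u = (ofHol hKX g hg : C(K, ℂ)) := ContinuousMap.ext hu
  exact ⟨g, hg, by rwa [dist_eq_norm] at hbu⟩

/-- The `j`-th coordinate function of `ℂⁿ`, as an element of `UnifAlg X K`. -/
def coord (hKX : K ⊆ X) (j : Fin n) : UnifAlg X K :=
  ofHol hKX (fun z ↦ z j) (by fun_prop)

/-- The point of `ℂⁿ` whose coordinates are the values of a character of `UnifAlg X K` at the
coordinate functions. -/
def point (hKX : K ⊆ X) (φ : characterSpace ℂ (UnifAlg X K)) : CSpace n :=
  WithLp.toLp 2 fun j ↦ φ (coord hKX j)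

/-- Evaluation at a point of `K`, as a character of `UnifAlg X K`. -/
def evalAt (x : K) : characterSpace ℂ (UnifAlg X K) :=
  CharacterSpace.equivAlgHom.symm ((ContinuousMap.evalAlgHom ℂ ℂ x).comp (UnifAlg X K).val)

lemma continuous_point (hKX : K ⊆ X) : Continuous (point (K := K) hKX) :=
  (PiLp.continuous_toLp 2 _).comp
    (continuous_pi fun j ↦ continuous_character_apply (coord hKX j))

lemma character_ofHol_clm (hKX : K ⊆ X) (φ : characterSpace ℂ (UnifAlg X K))
    (l : CSpace n →L[ℂ] ℂ) :
    φ (ofHol hKX l l.differentiable.differentiableOn) = l (point hKX φ) := by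
  have hsum (z : CSpace n) : l z = ∑ j, z j * l (EuclideanSpace.single j 1) := by
    conv_lhs => rw [← (EuclideanSpace.basisFun (Fin n) ℂ).sum_repr z]
    simp
  have hl : ofHol hKX l l.differentiable.differentiableOn
      = ∑ j, l (EuclideanSpace.single j 1) • coord (K := K) hKX j := by
    refine Subtype.ext (ContinuousMap.ext fun x ↦ ?_)
    simp [coord, hsum x, mul_comm]
  rw [hl, hsum]
  simp [point, mul_comm]

-- A functional `l` separating the point `a` of `φ` from `X` would make `l - l a`, which `φ`
-- annihilates, invertible.
lemma point_mem (hX : IsOpen X) (hXc : Convex ℝ X) (hKX : K ⊆ X)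
    (φ : characterSpace ℂ (UnifAlg X K)) : point hKX φ ∈ X := by
  by_contra ha
  obtain ⟨l, hl⟩ := RCLike.geometric_hahn_banach_open_point (𝕜 := ℂ) hXc hX ha
  have hne (z) (hz : z ∈ X) : l z - l (point hKX φ) ≠ 0 := fun h ↦
    (hl z hz).ne (by rw [sub_eq_zero.1 h])
  have hinv : DifferentiableOn ℂ (fun z ↦ (l z - l (point hKX φ))⁻¹) X :=
    (l.differentiable.differentiableOn.sub_const _).inv hne
  have hmul : (ofHol hKX l l.differentiable.differentiableOn
      - algebraMap ℂ (UnifAlg X K) (l (point hKX φ))) * ofHol hKX _ hinv = 1 :=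
    Subtype.ext (ContinuousMap.ext fun x ↦ mul_inv_cancel₀ (hne x (hKX x.2)))
  have hφ := congrArg φ hmul
  rw [map_mul, map_sub, map_one, AlgHomClass.commutes, character_ofHol_clm] at hφ
  simp at hφ

lemma character_ofHol (hX : IsOpen X) (hXc : Convex ℝ X) (hKX : K ⊆ X)
    (φ : characterSpace ℂ (UnifAlg X K)) {g : CSpace n → ℂ} (hg : DifferentiableOn ℂ g X) :
    φ (ofHol hKX g hg) = g (point hKX φ) := by
  obtain ⟨q, hq, hgq⟩ := exists_sub_eq_sum_sub_mul hX hXc hg (point_mem hX hXc hKX φ)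
  have hsum : ofHol hKX g hg - algebraMap ℂ (UnifAlg X K) (g (point hKX φ))
      = ∑ j, (coord hKX j - algebraMap ℂ (UnifAlg X K) (point hKX φ j)) *
        ofHol hKX (q j) (hq j) := by
    refine Subtype.ext (ContinuousMap.ext fun x ↦ ?_)
    simpa [coord] using hgq x (hKX x.2)
  have hcoord (j) : φ (coord hKX j) = point hKX φ j := rfl
  have hφ := congrArg φ hsum
  simp only [map_sub, map_sum, map_mul, AlgHomClass.commutes, hcoord, Algebra.algebraMap_self,
    RingHom.id_apply, sub_self, zero_mul, Finset.sum_const_zero] at hφ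
  exact sub_eq_zero.1 hφ

lemma point_mem_of_oHull_eq (hX : IsOpen X) (hXc : Convex ℝ X) (hKX : K ⊆ X)
    (hK : OHull X K = K) (φ : characterSpace ℂ (UnifAlg X K)) : point hKX φ ∈ K := by
  refine hK.subset ⟨point_mem hX hXc hKX φ, fun g hg ↦ ?_⟩
  rw [← character_ofHol hX hXc hKX φ hg]
  exact (norm_character_apply_le φ _).trans_eq (ContinuousMap.norm_eq_iSup_norm _)

lemma point_injective (hX : IsOpen X) (hXc : Convex ℝ X) (hKX : K ⊆ X) :
    Function.Injective (point (K := K) hKX) := by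
  intro φ ψ h
  refine DFunLike.ext _ _ fun b ↦ eq_of_norm_sub_le_zero (le_of_forall_pos_le_add fun ε hε ↦ ?_)
  obtain ⟨g, hg, hb⟩ := exists_norm_sub_ofHol_lt hKX b (half_pos hε)
  have hg_eq : φ (ofHol hKX g hg) = ψ (ofHol hKX g hg) := by
    rw [character_ofHol hX hXc, character_ofHol hX hXc, h]
  calc ‖φ b - ψ b‖ = ‖φ (b - ofHol hKX g hg) - ψ (b - ofHol hKX g hg)‖ := by
        rw [map_sub, map_sub, hg_eq, sub_sub_sub_cancel_right]
    _ ≤ ‖φ (b - ofHol hKX g hg)‖ + ‖ψ (b - ofHol hKX g hg)‖ := norm_sub_le _ _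
    _ ≤ ‖b - ofHol hKX g hg‖ + ‖b - ofHol hKX g hg‖ :=
        add_le_add (norm_character_apply_le φ _) (norm_character_apply_le ψ _)
    _ ≤ 0 + ε := by linarith

end UnifAlg

lemma exists_differentiableOn_norm_sub_indicator_lt {L L' : Set (CSpace n)} (hX : IsOpen X)
    (hXc : Convex ℝ X) (hL : IsCompact L) (hL' : IsCompact L') (hLL' : Disjoint L L')
    (hsub : L ∪ L' ⊆ X) (hhull : OHull X (L ∪ L') = L ∪ L') {ε : ℝ} (hε : 0 < ε) :
    ∃ h : CSpace n → ℂ, DifferentiableOn ℂ h X ∧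
      ∀ x ∈ L ∪ L', ‖h x - L.indicator 1 x‖ < ε := by
  have : CompactSpace ↥(L ∪ L') := isCompact_iff_compactSpace.1 (hL.union hL')
  have hcont := UnifAlg.continuous_point hsub
  have hcompl : (UnifAlg.point hsub ⁻¹' L)ᶜ = UnifAlg.point hsub ⁻¹' L' := by
    ext φ
    exact ⟨(UnifAlg.point_mem_of_oHull_eq hX hXc hsub hhull φ).resolve_left,
      fun h h' ↦ disjoint_left.1 hLL' h' h⟩
  have hclopen : IsClopen (UnifAlg.point hsub ⁻¹' L) := by
    refine ⟨hL.isClosed.preimage hcont, ?_⟩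
    rw [← isClosed_compl_iff, hcompl]
    exact hL'.isClosed.preimage hcont
  obtain ⟨e, -, he⟩ := exists_idempotent_of_isClopen (UnifAlg.coord hsub)
    (fun φ ψ h ↦ UnifAlg.point_injective hX hXc hsub (congrArg (WithLp.toLp 2) (funext h)))
    hclopen
  obtain ⟨g, hg, heg⟩ := UnifAlg.exists_norm_sub_ofHol_lt hsub e hε
  refine ⟨g, hg, fun x hx ↦ ?_⟩
  have hex : (e : C(↥(L ∪ L'), ℂ)) ⟨x, hx⟩ = L.indicator 1 x := he (UnifAlg.evalAt ⟨x, hx⟩)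
  rw [← hex, norm_sub_rev]
  exact (ContinuousMap.norm_coe_le_norm
    (e - UnifAlg.ofHol hsub g hg : UnifAlg X (L ∪ L')).1 ⟨x, hx⟩).trans_lt heg

end RestrictionAlgebra

section Hulls

variable {m n : ℕ} {X P : Set (CSpace n)}

lemma norm_le_of_mem_oHull {x : CSpace n} (hx : x ∈ OHull X P) {g : CSpace n → ℂ}
    (hg : DifferentiableOn ℂ g X) {M : ℝ} (hM : 0 ≤ M) (h : ∀ y ∈ P, ‖g y‖ ≤ M) : ‖g x‖ ≤ M :=
  (hx.2 g hg).trans (Real.iSup_le (fun y ↦ h y y.2) hM)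

lemma norm_le_iSup_norm (hP : IsCompact P) (hPX : P ⊆ X) {g : CSpace n → ℂ}
    (hg : DifferentiableOn ℂ g X) {y : CSpace n} (hy : y ∈ P) : ‖g y‖ ≤ ⨆ y : P, ‖g ↑y‖ := by
  obtain ⟨M, hM⟩ := hP.exists_bound_of_continuousOn (hg.continuousOn.mono hPX)
  exact le_ciSup (f := fun y : P ↦ ‖g y‖) ⟨M, forall_mem_range.2 fun z ↦ hM z z.2⟩ ⟨y, hy⟩

lemma iSup_norm_nonneg (P : Set (CSpace n)) (g : CSpace n → ℂ) : 0 ≤ ⨆ y : P, ‖g ↑y‖ :=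
  Real.iSup_nonneg fun _ ↦ norm_nonneg _

lemma oHull_subset : OHull X P ⊆ X := fun _ hx ↦ hx.1

lemma subset_oHull (hP : IsCompact P) (hPX : P ⊆ X) : P ⊆ OHull X P :=
  fun _ hx ↦ ⟨hPX hx, fun _ hg ↦ norm_le_iSup_norm hP hPX hg hx⟩

lemma map_mem_oHull {S A : Set (CSpace m)} {f : CSpace m → CSpace n}
    (hf : DifferentiableOn ℂ f S) (hfS : MapsTo f S X) (hP : IsCompact P) (hPX : P ⊆ X)
    (hfA : MapsTo f A P) {x : CSpace m} (hx : x ∈ OHull S A) : f x ∈ OHull X P :=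
  ⟨hfS hx.1, fun _ hg ↦ norm_le_of_mem_oHull hx (hg.comp hf hfS) (iSup_norm_nonneg _ _)
    fun _ hy ↦ norm_le_iSup_norm hP hPX hg (hfA hy)⟩

lemma exists_finite_subset_convexHull {E : Type*} [NormedAddCommGroup E] [NormedSpace ℝ E]
    [FiniteDimensional ℝ E] {U P : Set E} (hU : IsOpen U) (hP : IsCompact P) (hPU : P ⊆ U) :
    ∃ t ⊆ U, t.Finite ∧ P ⊆ convexHull ℝ t := by
  refine hP.induction_on (p := fun Q ↦ ∃ t ⊆ U, t.Finite ∧ Q ⊆ convexHull ℝ t)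
    ⟨∅, empty_subset U, finite_empty, empty_subset _⟩ ?_ ?_ fun x hx ↦ ?_
  · rintro Q Q' hQ ⟨t, htU, ht, hQ't⟩
    exact ⟨t, htU, ht, hQ.trans hQ't⟩
  · rintro Q Q' ⟨t, htU, ht, hQt⟩ ⟨t', htU', ht', hQt'⟩
    exact ⟨t ∪ t', union_subset htU htU', ht.union ht', union_subset
      (hQt.trans (convexHull_mono subset_union_left))
      (hQt'.trans (convexHull_mono subset_union_right))⟩
  · obtain ⟨u, hxu, huU⟩ :=
      (convex_singleton x).exists_subset_interior_convexHull_finset_of_isCompact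
        isCompact_singleton (hU.mem_nhdsSet.2 (singleton_subset_iff.2 (hPU hx)))
    exact ⟨interior (convexHull ℝ u), mem_nhdsWithin_of_mem_nhds
      (isOpen_interior.mem_nhds (hxu rfl)), u, (subset_convexHull ℝ _).trans huU,
      u.finite_toSet, interior_subset⟩

-- If `x ∉ C` then `exp ∘ l`, for `l` a functional separating `x` from `C`, shows `x ∉ OHull X P`.
lemma oHull_subset_of_convex {C : Set (CSpace n)} (hC : IsClosed C) (hCc : Convex ℝ C)
    (hPC : P ⊆ C) : OHull X P ⊆ C := by
  intro x hx
  by_contra hxC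
  obtain ⟨l, u, hl, hu⟩ := RCLike.geometric_hahn_banach_closed_point (𝕜 := ℂ) hCc hC hxC
  have hle : ‖Complex.exp (l x)‖ ≤ Real.exp u :=
    norm_le_of_mem_oHull hx l.differentiable.cexp.differentiableOn (Real.exp_nonneg u)
      fun y hy ↦ by
        rw [Complex.norm_exp]
        exact Real.exp_le_exp.2 (hl y (hPC hy)).le
  rw [Complex.norm_exp, Real.exp_le_exp] at hle
  exact hu.not_ge hle

lemma isCompact_oHull (hX : IsOpen X) (hXc : Convex ℝ X) (hP : IsCompact P) (hPX : P ⊆ X) :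
    IsCompact (OHull X P) := by
  obtain ⟨t, htX, ht, hPt⟩ := exists_finite_subset_convexHull hX hP hPX
  have hC : IsCompact (convexHull ℝ t) := ht.isCompact_convexHull ℝ
  have hCX : convexHull ℝ t ⊆ X := convexHull_min htX hXc
  have hsub : OHull X P ⊆ convexHull ℝ t :=
    oHull_subset_of_convex hC.isClosed (convex_convexHull ℝ t) hPt
  refine hC.of_isClosed_subset (isClosed_of_closure_subset fun x hx ↦ ?_) hsub
  refine ⟨hCX (closure_minimal hsub hC.isClosed hx), fun g hg ↦ ?_⟩
  have hclosed : IsClosed (convexHull ℝ t ∩ (fun y ↦ ‖g y‖) ⁻¹' Iic (⨆ y : P, ‖g ↑y‖)) :=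
    (hg.continuousOn.mono hCX).norm.preimage_isClosed_of_isClosed hC.isClosed isClosed_Iic
  have hsub' : OHull X P ⊆ convexHull ℝ t ∩ (fun y ↦ ‖g y‖) ⁻¹' Iic (⨆ y : P, ‖g ↑y‖) :=
    fun y hy ↦ ⟨hsub hy, hy.2 g hg⟩
  exact (closure_minimal hsub' hclosed hx).2

lemma oHull_oHull (hX : IsOpen X) (hXc : Convex ℝ X) (hP : IsCompact P) (hPX : P ⊆ X) :
    OHull X (OHull X P) = OHull X P :=
  Subset.antisymm
    (fun _ hx ↦ ⟨hx.1, fun g hg ↦ norm_le_of_mem_oHull hx hg (iSup_norm_nonneg P g)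
      fun _ hy ↦ hy.2 g hg⟩)
    (subset_oHull (isCompact_oHull hX hXc hP hPX) oHull_subset)

lemma oHull_image_eq {f f' : CSpace n → CSpace n} (hf : ContinuousOn f X) (hfX : MapsTo f X X)
    (hf' : DifferentiableOn ℂ f' X) (hfX' : MapsTo f' X X) (hinv : InvOn f' f X X)
    (hP : IsCompact P) (hPX : P ⊆ X) (hhull : OHull X P = P) : OHull X (f '' P) = f '' P := by
  refine Subset.antisymm (fun x hx ↦ ?_) (subset_oHull (hP.image_of_continuousOn (hf.mono hPX))
    (hfX.mono_left hPX).image_subset)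
  have hmem : f' x ∈ OHull X P :=
    map_mem_oHull hf' hfX' hP hPX (forall_mem_image.2 fun y hy ↦ by rwa [hinv.1 (hPX hy)]) hx
  exact ⟨f' x, hhull.subset hmem, hinv.2 hx.1⟩

lemma exists_differentiableOn_eq_one_norm_le {A : Set (CSpace n)} (hA : IsCompact A) (hAX : A ⊆ X)
    {x : CSpace n} (hxX : x ∈ X) (hx : x ∉ OHull X A) {δ : ℝ} (hδ : 0 < δ) :
    ∃ g : CSpace n → ℂ, DifferentiableOn ℂ g X ∧ g x = 1 ∧ ∀ y ∈ A, ‖g y‖ ≤ δ := by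
  obtain ⟨g, hg, hlt⟩ : ∃ g : CSpace n → ℂ, DifferentiableOn ℂ g X ∧ ⨆ y : A, ‖g ↑y‖ < ‖g x‖ := by
    by_contra! h
    exact hx ⟨hxX, h⟩
  have hgx : 0 < ‖g x‖ := (iSup_norm_nonneg A g).trans_lt hlt
  obtain ⟨N, hN⟩ := exists_pow_lt_of_lt_one hδ ((div_lt_one hgx).2 hlt)
  refine ⟨fun y ↦ (g y / g x) ^ N, ?_, ?_, fun y hy ↦ ?_⟩
  · simp_rw [div_eq_mul_inv]
    exact (hg.mul_const (g x)⁻¹).pow N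
  · beta_reduce
    rw [div_self (norm_pos_iff.1 hgx), one_pow]
  · rw [norm_pow, norm_div]
    refine le_trans ?_ hN.le
    gcongr
    exact norm_le_iSup_norm hA hAX hg hy

-- Otherwise some `g` has `g x = 1` and is small on `A`; with `h` close to `1` on `A ∪ {x}` and
-- sufficiently small on `A'`, the product `g * h` contradicts `x ∈ OHull X (A ∪ A')`.
lemma mem_oHull_of_approx_indicator {A A' : Set (CSpace n)} (hA : IsCompact A)
    (hA' : IsCompact A') (hAX : A ⊆ X) (hAX' : A' ⊆ X) {x : CSpace n} (hx : x ∈ OHull X (A ∪ A'))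
    (hsep : ∀ ε > 0, ∃ h : CSpace n → ℂ, DifferentiableOn ℂ h X ∧ ‖h x - 1‖ < ε ∧
      (∀ y ∈ A, ‖h y - 1‖ < ε) ∧ ∀ y ∈ A', ‖h y‖ < ε) : x ∈ OHull X A := by
  by_contra hxA
  obtain ⟨g, hg, hgx, hgA⟩ :=
    exists_differentiableOn_eq_one_norm_le hA hAX hx.1 hxA (by norm_num : (0 : ℝ) < 1 / 4)
  obtain ⟨M, hM⟩ := hA'.exists_bound_of_continuousOn (hg.continuousOn.mono hAX')
  obtain ⟨h, hh, hhx, hhA, hhA'⟩ := hsep (min (1 / 4) (1 / (2 * (|M| + 1)))) (by positivity)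
  have hle : ‖g x * h x‖ ≤ 1 / 2 := by
    refine norm_le_of_mem_oHull hx (hg.mul hh) (by norm_num) ?_
    rintro y (hy | hy) <;> simp only [Pi.mul_apply, norm_mul]
    · have hhy : ‖h y‖ ≤ 5 / 4 := by
        have := (hhA y hy).trans_le (min_le_left _ _)
        linarith [norm_le_norm_add_norm_sub' (h y) 1, norm_one (α := ℂ)]
      nlinarith [norm_nonneg (h y), hgA y hy]
    · calc ‖g y‖ * ‖h y‖ ≤ |M| * (1 / (2 * (|M| + 1))) :=
            mul_le_mul ((hM y hy).trans (le_abs_self M))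
              ((hhA' y hy).trans_le (min_le_right _ _)).le (norm_nonneg _) (abs_nonneg M)
        _ ≤ 1 / 2 := by
            rw [mul_one_div, div_le_iff₀ (by positivity)]
            linarith
  rw [hgx, one_mul] at hle
  have := hhx.trans_le (min_le_left _ _)
  linarith [norm_le_norm_add_norm_sub (h x) 1, norm_one (α := ℂ)]

lemma mem_oHull_of_map_mem {S A A' : Set (CSpace m)} {L L' : Set (CSpace n)}
    (hX : IsOpen X) (hXc : Convex ℝ X) {f : CSpace m → CSpace n} (hf : DifferentiableOn ℂ f S)
    (hfS : MapsTo f S X) (hA : IsCompact A) (hA' : IsCompact A') (hAS : A ⊆ S) (hAS' : A' ⊆ S)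
    (hL : IsCompact L) (hL' : IsCompact L') (hLL' : Disjoint L L') (hsub : L ∪ L' ⊆ X)
    (hhull : OHull X (L ∪ L') = L ∪ L') (hfA : MapsTo f A L) (hfA' : MapsTo f A' L')
    {x : CSpace m} (hx : x ∈ OHull S (A ∪ A')) (hfx : f x ∈ L) : x ∈ OHull S A := by
  refine mem_oHull_of_approx_indicator hA hA' hAS hAS' hx fun ε hε ↦ ?_
  obtain ⟨h, hh, hlt⟩ :=
    exists_differentiableOn_norm_sub_indicator_lt hX hXc hL hL' hLL' hsub hhull hε
  have hone (z) (hz : z ∈ L) : ‖h z - 1‖ < ε := by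
    simpa only [indicator_of_mem hz, Pi.one_apply] using hlt z (Or.inl hz)
  have hzero (z) (hz : z ∈ L') : ‖h z‖ < ε := by
    simpa only [indicator_of_notMem (disjoint_right.1 hLL' hz), sub_zero] using hlt z (Or.inr hz)
  exact ⟨h ∘ f, hh.comp hf hfS, hone _ hfx, fun y hy ↦ hone _ (hfA hy),
    fun y hy ↦ hzero _ (hfA' hy)⟩

theorem oHull_union_eq_of_mapsTo {S A A' : Set (CSpace m)} {L L' : Set (CSpace n)}
    (hX : IsOpen X) (hXc : Convex ℝ X) {f : CSpace m → CSpace n} (hf : DifferentiableOn ℂ f S)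
    (hfS : MapsTo f S X) (hA : IsCompact A) (hA' : IsCompact A') (hAS : A ⊆ S) (hAS' : A' ⊆ S)
    (hAhull : OHull S A = A) (hAhull' : OHull S A' = A')
    (hL : IsCompact L) (hL' : IsCompact L') (hLL' : Disjoint L L') (hsub : L ∪ L' ⊆ X)
    (hhull : OHull X (L ∪ L') = L ∪ L') (hfA : MapsTo f A L) (hfA' : MapsTo f A' L') :
    OHull S (A ∪ A') = A ∪ A' := by
  refine Subset.antisymm (fun x hx ↦ ?_) (subset_oHull (hA.union hA') (union_subset hAS hAS'))
  have hfx : f x ∈ L ∪ L' := hhull.subset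
    (map_mem_oHull hf hfS (hL.union hL') hsub (hfA.union_union hfA') hx)
  refine hfx.imp (fun hfx ↦ hAhull.subset ?_) fun hfx ↦ hAhull'.subset ?_
  · exact mem_oHull_of_map_mem hX hXc hf hfS hA hA' hAS hAS' hL hL' hLL' hsub hhull hfA hfA' hx hfx
  · rw [union_comm] at hx hsub
    rw [union_comm L] at hhull
    exact mem_oHull_of_map_mem hX hXc hf hfS hA' hA hAS' hAS hL' hL hLL'.symm hsub hhull hfA' hfA
      hx hfx

end Hulls

lemma leftInvOn_iterate {α : Type*} {S : Set α} {u v : α → α} (hv : MapsTo v S S)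
    (h : LeftInvOn u v S) (j : ℕ) : LeftInvOn u^[j] v^[j] S := by
  induction j with
  | zero => exact fun x _ ↦ rfl
  | succ j ih =>
    intro x hx
    rw [Function.iterate_succ_apply, Function.iterate_succ_apply', h (hv.iterate j hx), ih hx]

lemma iterate_apply_map {α β : Type*} {S : Set α} {f : α → β} {σ : α → α} {τ : β → β}
    (hσ : MapsTo σ S S) (h : ∀ x ∈ S, τ (f x) = f (σ x)) (j : ℕ) {x : α} (hx : x ∈ S) :
    τ^[j] (f x) = f (σ^[j] x) := by
  induction j with
  | zero => rfl
  | succ j ih =>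
    rw [Function.iterate_succ_apply', Function.iterate_succ_apply', ih, h _ (hσ.iterate j hx)]

theorem stmt_15_general {m n : ℕ} {S : Set (CSpace m)} {X : Set (CSpace n)} (hX : IsOpen X)
    (hXc : Convex ℝ X) {f : CSpace m → CSpace n} (hf : DifferentiableOn ℂ f S)
    (hfS : MapsTo f S X) {τ : CSpace n → CSpace n} (hτ : ContinuousOn τ X)
    (hτX : MapsTo τ X X) (hτgen : IsGenTranslation X τ) {σ σ' : CSpace m → CSpace m}
    (hσ : ContinuousOn σ S) (hσS : MapsTo σ S S) (hσ' : DifferentiableOn ℂ σ' S)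
    (hσS' : MapsTo σ' S S) (hinv : InvOn σ' σ S S) (hcomm : ∀ x ∈ S, τ (f x) = f (σ x)) :
    IsGenTranslation S σ := by
  intro K hK hKS hKhull
  have hfK : IsCompact (f '' K) := hK.image_of_continuousOn (hf.continuousOn.mono hKS)
  have hfKX : f '' K ⊆ X := (hfS.mono_left hKS).image_subset
  set L := OHull X (f '' K)
  have hL : IsCompact L := isCompact_oHull hX hXc hfK hfKX
  have hLX : L ⊆ X := oHull_subset
  obtain ⟨j, hj, hdisj, hhull⟩ := hτgen L hL hLX (oHull_oHull hX hXc hfK hfKX)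
  have hLL' : Disjoint (τ^[j] '' L) L := disjoint_iff_inter_eq_empty.2 hdisj
  have hKL : MapsTo f K L := mapsTo_iff_image_subset.2 (subset_oHull hfK hfKX)
  have hσKL : MapsTo f (σ^[j] '' K) (τ^[j] '' L) :=
    forall_mem_image.2 fun x hx ↦ ⟨f x, hKL hx, iterate_apply_map hσS hcomm j (hKS hx)⟩
  have hσKhull : OHull S (σ^[j] '' K) = σ^[j] '' K :=
    oHull_image_eq (hσ.iterate hσS j) (hσS.iterate j) (hσ'.iterate hσS' j) (hσS'.iterate j)
      ⟨leftInvOn_iterate hσS hinv.1 j, leftInvOn_iterate hσS' hinv.2 j⟩ hK hKS hKhull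
  exact ⟨j, hj, ((hLL'.preimage f).mono hσKL hKL).inter_eq,
    oHull_union_eq_of_mapsTo hX hXc hf hfS
      (hK.image_of_continuousOn ((hσ.iterate hσS j).mono hKS)) hK
      ((hσS.iterate j).mono_left hKS).image_subset hKS hσKhull hKhull
      (hL.image_of_continuousOn ((hτ.iterate hτX j).mono hLX)) hL hLL'
      (union_subset ((hτX.iterate j).mono_left hLX).image_subset hLX) hhull hσKL hKL⟩

/-- Let `S ⊆ ℂᵐ` and `X ⊆ ℂⁿ` be convex domains and `f : S → X` a holomorphic
map. If `τ` is an automorphism of `X` which is a generalized translation and `σ` is an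
automorphism of `S` with `τ ∘ f = f ∘ σ` on `S`, then `σ` is a generalized translation. -/
theorem stmt_15 {m n : ℕ} (S : Set (CSpace m)) (hSopen : IsOpen S) (hSconv : Convex ℝ S)
    (hSne : S.Nonempty)
    (X : Set (CSpace n)) (hXopen : IsOpen X) (hXconv : Convex ℝ X) (hXne : X.Nonempty)
    (f : CSpace m → CSpace n) (hfdiff : DifferentiableOn ℂ f S) (hfmaps : Set.MapsTo f S X)
    (τ : CSpace n → CSpace n) (hτdiff : DifferentiableOn ℂ τ X) (hτmaps : Set.MapsTo τ X X)
    (hτbij : ∃ τ' : CSpace n → CSpace n, DifferentiableOn ℂ τ' X ∧ Set.MapsTo τ' X X ∧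
      (∀ x ∈ X, τ' (τ x) = x) ∧ (∀ x ∈ X, τ (τ' x) = x))
    (hτgen : IsGenTranslation X τ)
    (σ : CSpace m → CSpace m) (hσdiff : DifferentiableOn ℂ σ S) (hσmaps : Set.MapsTo σ S S)
    (hσbij : ∃ σ' : CSpace m → CSpace m, DifferentiableOn ℂ σ' S ∧ Set.MapsTo σ' S S ∧
      (∀ x ∈ S, σ' (σ x) = x) ∧ (∀ x ∈ S, σ (σ' x) = x))
    (hcomm : ∀ x ∈ S, τ (f x) = f (σ x)) :
    IsGenTranslation S σ := by
  obtain ⟨σ', hσ', hσS', hinv⟩ := hσbij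
  exact stmt_15_general hXopen hXconv hfdiff hfmaps hτdiff.continuousOn hτmaps hτgen
    hσdiff.continuousOn hσmaps hσ' hσS' hinv hcomm
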